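/- For k ≥ 1, set s_ℓ = ∑_{n≥0} a_{ℓ,0}(n)/4ⁿ (a convergent sum for each ℓ ≥ 0). As n → ∞, the proportion of walks on the slit plane of length n that visit the point (k,0) tends to p_k = s_k · (∑_{ℓ=0}^{k−1} s_ℓ)/(∑_{ℓ=0}^{k−1} s_ℓ²), and p_k < 1; moreover the average number of visits to (k,0) of a uniformly random n-step walk on the slit plane tends to v_k = 4(√2−1) · s_k · ∑_{ℓ=0}^{k−1} s_ℓ. In particular p_1 = 2−√2, p_2 = (5/34)(19−11√2), v_1 = 4(3√2−4), and v_2 = 10(22√2−31). -/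

import Mathlib

open Filter

/-- The forbidden half-line `H = {(k,0) : k ≤ 0}`. -/
def slitH : Set (ℤ × ℤ) := {p : ℤ × ℤ | p.2 = 0 ∧ p.1 ≤ 0}

/-- The four steps of the ordinary square lattice. -/
def sqSteps : Set (ℤ × ℤ) := {(1,0), (-1,0), (0,1), (0,-1)}

/-- The four diagonal steps. -/
def diagSteps : Set (ℤ × ℤ) := {(1,1), (1,-1), (-1,1), (-1,-1)}

/-- `w : Fin (n+1) → ℤ × ℤ` is a walk on the slit plane with steps in `A`. -/
def IsSlitWalk (A : Set (ℤ × ℤ)) (n : ℕ) (w : Fin (n+1) → ℤ × ℤ) : Prop :=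
  w 0 = (0,0) ∧ (∀ m : Fin n, w m.succ - w m.castSucc ∈ A) ∧
    ∀ m : Fin (n+1), 1 ≤ (m : ℕ) → w m ∉ slitH

/-- `a_{i,j}(n)`: the number of walks on the slit plane of length `n` ending at `(i,j)`. -/
noncomputable def slitCount (A : Set (ℤ × ℤ)) (i j : ℤ) (n : ℕ) : ℕ :=
  Nat.card {w : Fin (n+1) → ℤ × ℤ // IsSlitWalk A n w ∧ w (Fin.last n) = (i, j)}
/-- `a(n)`: the total number of walks on the slit plane of length `n`. -/
noncomputable def slitTotal (A : Set (ℤ × ℤ)) (n : ℕ) : ℕ :=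
  Nat.card {w : Fin (n+1) → ℤ × ℤ // IsSlitWalk A n w}

/-- The number of walks on the slit plane of length `n` that visit the point `(k,0)`. -/
noncomputable def visitCount (k : ℤ) (n : ℕ) : ℕ :=
  Nat.card {w : Fin (n+1) → ℤ × ℤ // IsSlitWalk sqSteps n w ∧ ∃ m : Fin (n+1), w m = (k, 0)}

/-- The total number of visits to `(k,0)` of all walks on the slit plane of length `n`
(counted as pairs (walk, time of a visit)). -/
noncomputable def totalVisits (k : ℤ) (n : ℕ) : ℕ :=
  Nat.card {p : (Fin (n+1) → ℤ × ℤ) × Fin (n+1) //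
    IsSlitWalk sqSteps n p.1 ∧ p.1 p.2 = (k, 0)}

/-- `s_ℓ = ∑_{n≥0} a_{ℓ,0}(n)/4ⁿ`. -/
noncomputable def sSum (ℓ : ℕ) : ℝ := ∑' n : ℕ, (slitCount sqSteps ℓ 0 n : ℝ) / 4 ^ n

/-- `p_k`, the limit proportion of walks visiting `(k,0)`. -/
noncomputable def limVisitProb (k : ℕ) : ℝ :=
  sSum k * (∑ ℓ ∈ Finset.range k, sSum ℓ) / (∑ ℓ ∈ Finset.range k, (sSum ℓ) ^ 2)

/-- `v_k`, the limit of the average number of visits to `(k,0)`. -/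
noncomputable def limVisitNum (k : ℕ) : ℝ :=
  4 * (Real.sqrt 2 - 1) * sSum k * ∑ ℓ ∈ Finset.range k, sSum ℓ

namespace SlitPf

/-- One step operator: walks avoiding `V`. -/
noncomputable def TT (V : Set (ℤ × ℤ)) : (ℤ × ℤ → ℝ) →ₗ[ℝ] (ℤ × ℤ → ℝ) where
  toFun f p := Vᶜ.indicator f (p + (1,0)) + Vᶜ.indicator f (p + (-1,0))
    + Vᶜ.indicator f (p + (0,1)) + Vᶜ.indicator f (p + (0,-1))
  map_add' f g := by
    funext p
    simp only [Set.indicator_add', Pi.add_apply]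
    ring
  map_smul' c f := by
    funext p
    have h : ∀ q, Vᶜ.indicator (c • f) q = c * Vᶜ.indicator f q := by
      intro q
      by_cases hq : q ∈ V <;> simp [hq]
    simp only [h, Pi.smul_apply, smul_eq_mul, RingHom.id_apply]
    ring

theorem TT_apply (V : Set (ℤ × ℤ)) (f : ℤ × ℤ → ℝ) (p : ℤ × ℤ) :
    TT V f p = Vᶜ.indicator f (p + (1,0)) + Vᶜ.indicator f (p + (-1,0))
    + Vᶜ.indicator f (p + (0,1)) + Vᶜ.indicator f (p + (0,-1)) := rfl

/-- Walks from `p` avoiding `V` with constraints `g`. -/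
def Wk (V : Set (ℤ × ℤ)) (n : ℕ) (g : ℕ → ℤ × ℤ → Prop) (p : ℤ × ℤ) :
    Set (Fin (n+1) → ℤ × ℤ) :=
  {w | w 0 = p ∧ (∀ m : Fin n, w m.succ - w m.castSucc ∈ sqSteps) ∧
    (∀ m : Fin (n+1), 1 ≤ (m : ℕ) → w m ∉ V) ∧ ∀ m : Fin (n+1), g m (w m)}

open Classical in
/-- piece of the walks by first step -/
noncomputable def Pc (V : Set (ℤ × ℤ)) (n : ℕ) (g : ℕ → ℤ × ℤ → Prop) (p s : ℤ × ℤ) :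
    Set (Fin (n+1+1) → ℤ × ℤ) :=
  if p + s ∈ V then ∅ else
    (fun w : Fin (n+1) → ℤ × ℤ => (Fin.cons p w : Fin (n+1+1) → ℤ × ℤ)) ''
      Wk V n (fun i => g (i+1)) (p + s)

theorem Wk_zero (V : Set (ℤ × ℤ)) (g : ℕ → ℤ × ℤ → Prop) (p : ℤ × ℤ) (h : g 0 p) :
    Wk V 0 g p = {fun _ => p} := by
  ext w
  simp only [Wk, Set.mem_ofPred_eq, Set.mem_singleton_iff]
  constructor
  · rintro ⟨h0, -⟩
    funext i
    rw [show i = 0 from Fin.ext (by have := i.isLt; simp), h0]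
  · rintro rfl
    refine ⟨rfl, fun m => m.elim0, fun m hm => ?_, fun m => ?_⟩
    · have := m.isLt; omega
    · have : (m : ℕ) = 0 := by have := m.isLt; omega
      rw [this]; exact h

theorem Wk_empty (V : Set (ℤ × ℤ)) (n : ℕ) (g : ℕ → ℤ × ℤ → Prop) (p : ℤ × ℤ) (h : ¬ g 0 p) :
    Wk V n g p = ∅ := by
  ext w
  simp only [Wk, Set.mem_ofPred_eq, Set.mem_empty_iff_false, iff_false]
  rintro ⟨h0, -, -, h4⟩
  have := h4 0
  rw [h0] at this
  exact h this

theorem mem_Pc (V : Set (ℤ × ℤ)) (n : ℕ) (g : ℕ → ℤ × ℤ → Prop) (p s : ℤ × ℤ) (h : g 0 p)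
    (hs : s ∈ sqSteps) (w : Fin (n+1+1) → ℤ × ℤ) :
    w ∈ Pc V n g p s ↔ w ∈ Wk V (n+1) g p ∧ w 1 = p + s := by
  unfold Pc
  split_ifs with hV
  · simp only [Set.mem_empty_iff_false, false_iff, not_and]
    rintro ⟨-, -, h3, -⟩ h1
    exact h3 1 (by simp) (h1 ▸ hV)
  · simp only [Set.mem_image]
    constructor
    · rintro ⟨w', ⟨h0, h2, h3, h4⟩, rfl⟩
      refine ⟨⟨by simp, ?_, ?_, ?_⟩, ?_⟩
      · intro m
        refine Fin.cases ?_ (fun m => ?_) m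
        · simp only [Fin.cons_succ, Fin.castSucc_zero, Fin.cons_zero, h0]
          simpa using hs
        · rw [← Fin.succ_castSucc]
          simp only [Fin.cons_succ]
          exact h2 m
      · intro m
        refine Fin.cases ?_ (fun m => ?_) m
        · simp
        · intro _
          simp only [Fin.cons_succ]
          by_cases hm : m = 0
          · rw [hm, h0]; exact hV
          · exact h3 m (Nat.one_le_iff_ne_zero.mpr (fun h => hm (Fin.ext h)))
      · intro m
        refine Fin.cases ?_ (fun m => ?_) m
        · simpa using h
        · simp only [Fin.cons_succ, Fin.val_succ]
          exact h4 m
      · have : (1 : Fin (n+1+1)) = Fin.succ 0 := rfl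
        rw [this]
        simp only [Fin.cons_succ, h0]
    · rintro ⟨⟨h0, h2, h3, h4⟩, h1⟩
      refine ⟨Fin.tail w, ⟨?_, ?_, ?_, ?_⟩, ?_⟩
      · exact h1
      · intro m
        have := h2 m.succ
        rwa [← Fin.succ_castSucc] at this
      · intro m hm
        exact h3 m.succ (by simp)
      · intro m
        exact h4 m.succ
      · rw [← h0]; exact Fin.cons_self_tail w

theorem Wk_succ (V : Set (ℤ × ℤ)) (n : ℕ) (g : ℕ → ℤ × ℤ → Prop) (p : ℤ × ℤ) (h : g 0 p) :
    Wk V (n+1) g p = ((Pc V n g p (1,0) ∪ Pc V n g p (-1,0)) ∪ Pc V n g p (0,1))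
      ∪ Pc V n g p (0,-1) := by
  ext w
  have e1 : ((1,0) : ℤ × ℤ) ∈ sqSteps := by simp [sqSteps]
  have e2 : ((-1,0) : ℤ × ℤ) ∈ sqSteps := by simp [sqSteps]
  have e3 : ((0,1) : ℤ × ℤ) ∈ sqSteps := by simp [sqSteps]
  have e4 : ((0,-1) : ℤ × ℤ) ∈ sqSteps := by simp [sqSteps]
  simp only [Set.mem_union, mem_Pc V n g p _ h e1, mem_Pc V n g p _ h e2, mem_Pc V n g p _ h e3,
    mem_Pc V n g p _ h e4]
  constructor
  · intro hw
    have h2 := hw.2.1 0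
    have h0 := hw.1
    have hh : w 1 - p ∈ sqSteps := by
      rw [← h0]; exact h2
    simp only [sqSteps, Set.mem_insert_iff, Set.mem_singleton_iff, sub_eq_iff_eq_add'] at hh
    tauto
  · tauto

open Classical in
theorem Pc_card (V : Set (ℤ × ℤ)) (n : ℕ) (g : ℕ → ℤ × ℤ → Prop) (p s : ℤ × ℤ) :
    ((Pc V n g p s).ncard : ℝ) =
      Vᶜ.indicator (fun q => ((Wk V n (fun i => g (i+1)) q).ncard : ℝ)) (p + s) := by
  unfold Pc
  by_cases hV : p + s ∈ V
  · simp [hV]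
  · rw [if_neg hV, Set.ncard_image_of_injective _ (Fin.cons_right_injective (α := fun _ => ℤ × ℤ) p)]
    simp [hV]

theorem Wk_finite (V : Set (ℤ × ℤ)) (n : ℕ) : ∀ (g : ℕ → ℤ × ℤ → Prop) (p : ℤ × ℤ),
    (Wk V n g p).Finite := by
  induction n with
  | zero =>
    intro g p
    by_cases h : g 0 p
    · rw [Wk_zero V g p h]; exact Set.finite_singleton _
    · rw [Wk_empty V 0 g p h]; exact Set.finite_empty
  | succ n ih =>
    intro g p
    have hP : ∀ s, (Pc V n g p s).Finite := by
      intro s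
      unfold Pc
      split_ifs
      · exact Set.finite_empty
      · exact (ih _ _).image _
    by_cases h : g 0 p
    · rw [Wk_succ V n g p h]
      exact (((hP _).union (hP _)).union (hP _)).union (hP _)
    · rw [Wk_empty V _ g p h]; exact Set.finite_empty

theorem Wk_card_succ (V : Set (ℤ × ℤ)) (n : ℕ) (g : ℕ → ℤ × ℤ → Prop) (p : ℤ × ℤ) (h : g 0 p) :
    ((Wk V (n+1) g p).ncard : ℝ) =
      TT V (fun q => ((Wk V n (fun i => g (i+1)) q).ncard : ℝ)) p := by
  have hP : ∀ s, (Pc V n g p s).Finite := by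
      intro s
      unfold Pc
      split_ifs
      · exact Set.finite_empty
      · exact (Wk_finite V n _ _).image _
  have e1 : ((1,0) : ℤ × ℤ) ∈ sqSteps := by simp [sqSteps]
  have e2 : ((-1,0) : ℤ × ℤ) ∈ sqSteps := by simp [sqSteps]
  have e3 : ((0,1) : ℤ × ℤ) ∈ sqSteps := by simp [sqSteps]
  have e4 : ((0,-1) : ℤ × ℤ) ∈ sqSteps := by simp [sqSteps]
  have hd : ∀ s s', s ∈ sqSteps → s' ∈ sqSteps → s ≠ s' →
      Disjoint (Pc V n g p s) (Pc V n g p s') := by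
    intro s s' hs hs' hne
    rw [Set.disjoint_left]
    intro w hw hw'
    rw [mem_Pc V n g p _ h hs] at hw
    rw [mem_Pc V n g p _ h hs'] at hw'
    exact hne (add_left_cancel (hw.2.symm.trans hw'.2))
  rw [Wk_succ V n g p h, Set.ncard_union_eq _ (((hP _).union (hP _)).union (hP _)) (hP _),
    Set.ncard_union_eq _ ((hP _).union (hP _)) (hP _), Set.ncard_union_eq _ (hP _) (hP _), TT_apply]
  · push_cast
    simp only [Pc_card]
  · exact hd _ _ e1 e2 (by decide)
  · rw [Set.disjoint_union_left]
    exact ⟨hd _ _ e1 e3 (by decide), hd _ _ e2 e3 (by decide)⟩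
  · rw [Set.disjoint_union_left, Set.disjoint_union_left]
    exact ⟨⟨hd _ _ e1 e4 (by decide), hd _ _ e2 e4 (by decide)⟩, hd _ _ e3 e4 (by decide)⟩

theorem TT_pow_succ (V : Set (ℤ × ℤ)) (n : ℕ) (f : ℤ × ℤ → ℝ) :
    (TT V ^ (n+1)) f = TT V ((TT V ^ n) f) := by
  rw [pow_succ']; rfl

theorem TT_pow_succ' (V : Set (ℤ × ℤ)) (n : ℕ) (f : ℤ × ℤ → ℝ) :
    (TT V ^ (n+1)) f = (TT V ^ n) (TT V f) := by
  rw [pow_succ]; rfl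

/-- indicator of a point -/
def dl (q : ℤ × ℤ) : ℤ × ℤ → ℝ := Pi.single q 1

theorem card_all (V : Set (ℤ × ℤ)) (n : ℕ) (p : ℤ × ℤ) :
    ((Wk V n (fun _ _ => True) p).ncard : ℝ) = (TT V ^ n) 1 p := by
  induction n generalizing p with
  | zero => rw [Wk_zero V _ p trivial]; simp
  | succ n ih =>
    rw [Wk_card_succ V n _ p trivial, TT_pow_succ]
    have : (fun q => ((Wk V n (fun _ _ => True) q).ncard : ℝ)) = (TT V ^ n) 1 := funext ih
    rw [this]

theorem card_visit (V : Set (ℤ × ℤ)) (m n : ℕ) (e p : ℤ × ℤ) :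
    ((Wk V (n + m) (fun i q => i = m → q = e) p).ncard : ℝ)
      = (TT V ^ n) 1 e * (TT V ^ m) (dl e) p := by
  induction m generalizing p with
  | zero =>
    by_cases hp : p = e
    · subst hp
      cases n with
      | zero => rw [Wk_zero V _ p (by simp)]; simp [dl]
      | succ n =>
        rw [Wk_card_succ V _ _ p (by simp), TT_pow_succ]
        simp only [Nat.add_eq_zero_iff, one_ne_zero, and_false, false_imp_iff]
        simp only [card_all]
        simp [dl]
    · rw [Wk_empty V _ _ p (by simpa using hp)]
      simp [dl, hp]
  | succ m ih =>
    rw [← add_assoc, Wk_card_succ V _ _ p (by simp), TT_pow_succ]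
    simp only [add_left_inj]
    have : (fun q => ((Wk V (n + m) (fun i q => i = m → q = e) q).ncard : ℝ))
      = (TT V ^ n) 1 e • (TT V ^ m) (dl e) := by
      funext q
      rw [ih q]; rfl
    rw [this, map_smul]; rfl

theorem card_eq_ncard {α : Type*} (P : α → Prop) (S : Set α) (h : ∀ w, P w ↔ w ∈ S) :
    Nat.card {w // P w} = S.ncard := by
  rw [← Nat.card_coe_set_eq]
  exact Nat.card_congr (Equiv.subtypeEquivRight h)

theorem total_eq (n : ℕ) : (slitTotal sqSteps n : ℝ) = (TT slitH ^ n) 1 (0,0) := by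
  rw [← card_all]
  unfold slitTotal
  rw [card_eq_ncard _ (Wk slitH n (fun _ _ => True) (0,0))]
  intro w
  simp [Wk, IsSlitWalk]

theorem visit_at (k : ℤ × ℤ) (m n : ℕ) (hm : m ≤ n) :
    (Nat.card {w : Fin (n+1) → ℤ × ℤ // IsSlitWalk sqSteps n w ∧
      w ⟨m, Nat.lt_succ_of_le hm⟩ = k} : ℝ)
      = (TT slitH ^ m) (dl k) (0,0) * (TT slitH ^ (n - m)) 1 k := by
  obtain ⟨j, rfl⟩ := Nat.exists_eq_add_of_le' hm
  have := card_visit slitH m j k (0,0)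
  rw [Nat.add_sub_cancel, mul_comm, ← this,
    card_eq_ncard _ (Wk slitH (j + m) (fun i q => i = m → q = k) (0,0))]
  intro w
  simp only [Wk, IsSlitWalk, Set.mem_ofPred_eq, and_assoc]
  refine and_congr_right fun _ => and_congr_right fun _ => and_congr_right fun _ => ?_
  constructor
  · intro h i hi
    rw [← h]
    congr 1
    exact Fin.ext hi
  · intro h
    exact h ⟨m, Nat.lt_succ_of_le hm⟩ rfl

theorem count_eq (l : ℤ) (n : ℕ) :
    (slitCount sqSteps l 0 n : ℝ) = (TT slitH ^ n) (dl (l,0)) (0,0) := by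
  have := visit_at (l,0) n n le_rfl
  simp only [Nat.sub_self, pow_zero, Module.End.one_apply, Pi.one_apply, mul_one] at this
  rw [← this]
  rfl

theorem walk_finite (n : ℕ) : Finite {w : Fin (n+1) → ℤ × ℤ // IsSlitWalk sqSteps n w} := by
  have h := Wk_finite slitH n (fun _ _ => True) (0,0)
  have h2 : Finite ↑(Wk slitH n (fun _ _ => True) (0,0)) := h
  have h3 : ∀ w, w ∈ Wk slitH n (fun _ _ => True) (0,0) ↔ IsSlitWalk sqSteps n w := by
    intro w
    simp [Wk, IsSlitWalk]
  exact Finite.of_equiv _ (Equiv.subtypeEquivRight h3)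

theorem visits_eq (k : ℤ) (n : ℕ) :
    (totalVisits k n : ℝ) = ∑ m ∈ Finset.range (n+1),
      (TT slitH ^ m) (dl (k,0)) (0,0) * (TT slitH ^ (n - m)) 1 (k,0) := by
  have hfin : ∀ P : (Fin (n+1) → ℤ × ℤ) → Prop,
      Finite {w : Fin (n+1) → ℤ × ℤ // IsSlitWalk sqSteps n w ∧ P w} := by
    intro P
    have := walk_finite n
    exact Finite.of_injective (β := {w : Fin (n+1) → ℤ × ℤ // IsSlitWalk sqSteps n w})
      (fun w => ⟨w.1, w.2.1⟩) (fun a b h => Subtype.ext (by simpa using h))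
  have h1 : totalVisits k n = ∑ m : Fin (n+1),
      Nat.card {w : Fin (n+1) → ℤ × ℤ // IsSlitWalk sqSteps n w ∧ w m = (k,0)} := by
    unfold totalVisits
    have := fun m : Fin (n+1) => hfin (fun w => w m = (k,0))
    rw [← Nat.card_sigma]
    refine Nat.card_congr ⟨fun p => ⟨p.1.2, ⟨p.1.1, p.2⟩⟩, fun p => ⟨(p.2.1, p.1), p.2.2⟩, ?_, ?_⟩
    · intro p; rfl
    · intro p; rfl
  rw [h1, ← Fin.sum_univ_eq_sum_range (fun m => (TT slitH ^ m) (dl (k,0)) (0,0) *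
    (TT slitH ^ (n - m)) 1 (k,0)) (n+1)]
  push_cast
  refine Finset.sum_congr rfl fun m _ => ?_
  exact visit_at (k,0) m n (Nat.lt_succ_iff.mp m.isLt)

theorem nonvisit_eq (k : ℤ) (hk : 1 ≤ k) (n : ℕ) :
    (slitTotal sqSteps n : ℝ) = visitCount k n + (TT (slitH ∪ {(k,0)}) ^ n) 1 (0,0) := by
  rw [← card_all]
  have hf : (Wk slitH n (fun _ _ => True) (0,0)).Finite := Wk_finite _ _ _ _
  set B : Set (Fin (n+1) → ℤ × ℤ) := {w | ∃ m, w m = (k,0)} with hB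
  have e1 : slitTotal sqSteps n = (Wk slitH n (fun _ _ => True) (0,0)).ncard := by
    unfold slitTotal
    apply card_eq_ncard
    intro w
    simp [Wk, IsSlitWalk]
  have e2 : visitCount k n = (Wk slitH n (fun _ _ => True) (0,0) ∩ B).ncard := by
    unfold visitCount
    apply card_eq_ncard
    intro w
    simp [Wk, IsSlitWalk, hB, and_assoc]
  have e3 : Wk (slitH ∪ {(k,0)}) n (fun _ _ => True) (0,0) =
      Wk slitH n (fun _ _ => True) (0,0) \ B := by
    ext w
    simp only [Wk, hB, Set.mem_ofPred_eq, Set.mem_sdiff, Set.mem_union, Set.mem_singleton_iff,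
      not_or, implies_true, and_true]
    constructor
    · rintro ⟨h0, h1, h2⟩
      refine ⟨⟨h0, h1, fun m hm => (h2 m hm).1⟩, ?_⟩
      rintro ⟨m, hm⟩
      by_cases h : (m : ℕ) = 0
      · have : m = 0 := Fin.ext h
        rw [this, h0, Prod.mk.injEq] at hm
        omega
      · exact (h2 m (by omega)).2 hm
    · rintro ⟨⟨h0, h1, h2⟩, h3⟩
      exact ⟨h0, h1, fun m hm => ⟨h2 m hm, fun h => h3 ⟨m, h⟩⟩⟩
  rw [e1, e2, e3]
  exact_mod_cast (Set.ncard_inter_add_ncard_sdiff_eq_ncard _ B hf).symm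

end SlitPf
namespace SlitPf

/-- neighbours indicator -/
noncomputable def eta (q : ℤ × ℤ) : ℤ × ℤ → ℝ :=
  dl (q + (1,0)) + dl (q + (-1,0)) + dl (q + (0,1)) + dl (q + (0,-1))

theorem ind_nonneg (V : Set (ℤ × ℤ)) {f : ℤ × ℤ → ℝ} (hf : ∀ p, 0 ≤ f p) (p : ℤ × ℤ) :
    0 ≤ Vᶜ.indicator f p := Set.indicator_nonneg (fun x _ => hf x) p

theorem TT_nonneg (V : Set (ℤ × ℤ)) {f : ℤ × ℤ → ℝ} (hf : ∀ p, 0 ≤ f p) (p : ℤ × ℤ) :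
    0 ≤ TT V f p := by
  rw [TT_apply]
  have := ind_nonneg V hf
  linarith [this (p + (1,0)), this (p + (-1,0)), this (p + (0,1)), this (p + (0,-1))]

theorem TT_pow_nonneg (V : Set (ℤ × ℤ)) {f : ℤ × ℤ → ℝ} (hf : ∀ p, 0 ≤ f p) (n : ℕ) (p : ℤ × ℤ) :
    0 ≤ (TT V ^ n) f p := by
  induction n generalizing p with
  | zero => simpa using hf p
  | succ n ih => rw [TT_pow_succ]; exact TT_nonneg V ih p

theorem TT_abs (V : Set (ℤ × ℤ)) {f : ℤ × ℤ → ℝ} {K : ℝ} (hf : ∀ p, |f p| ≤ K) (p : ℤ × ℤ) :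
    |TT V f p| ≤ 4 * K := by
  have h : ∀ q, |Vᶜ.indicator f q| ≤ K := by
    intro q
    by_cases hq : q ∈ V
    · simp only [Set.mem_compl_iff, hq, not_true_eq_false, not_false_eq_true, Set.indicator_of_notMem, abs_zero]
      exact (abs_nonneg _).trans (hf q)
    · simpa [hq] using hf q
  rw [TT_apply]
  have a1 := abs_le.mp (h (p + (1,0)))
  have a2 := abs_le.mp (h (p + (-1,0)))
  have a3 := abs_le.mp (h (p + (0,1)))
  have a4 := abs_le.mp (h (p + (0,-1)))
  rw [abs_le]
  constructor <;> linarith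

theorem TT_pow_abs (V : Set (ℤ × ℤ)) {f : ℤ × ℤ → ℝ} {K : ℝ} (hf : ∀ p, |f p| ≤ K) (n : ℕ)
    (p : ℤ × ℤ) : |(TT V ^ n) f p| ≤ 4 ^ n * K := by
  induction n generalizing p with
  | zero => simpa using hf p
  | succ n ih =>
    rw [TT_pow_succ, pow_succ']
    have := TT_abs V ih p
    linarith

theorem TT_mono (V : Set (ℤ × ℤ)) {f g : ℤ × ℤ → ℝ} (h : ∀ p, f p ≤ g p) (n : ℕ) (p : ℤ × ℤ) :
    (TT V ^ n) f p ≤ (TT V ^ n) g p := by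
  have := TT_pow_nonneg V (f := g - f) (fun p => by simpa using h p) n p
  rw [map_sub] at this
  simpa using this

theorem surv_anti (V : Set (ℤ × ℤ)) (n : ℕ) (p : ℤ × ℤ) :
    (TT V ^ (n+1)) 1 p ≤ 4 * (TT V ^ n) 1 p := by
  rw [TT_pow_succ']
  have h : ∀ p, TT V 1 p ≤ (4 • (1 : ℤ × ℤ → ℝ)) p := by
    intro p
    have := TT_abs V (f := 1) (K := 1) (by simp) p
    have := (abs_le.mp this).2
    simpa using this
  have := TT_mono V h n p
  rw [map_nsmul] at this
  simpa using this

/-- resolvent -/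
noncomputable def RR (V : Set (ℤ × ℤ)) (t : ℝ) (f : ℤ × ℤ → ℝ) (p : ℤ × ℤ) : ℝ :=
  ∑' n : ℕ, t ^ n * (TT V ^ n) f p

theorem RR_bound (V : Set (ℤ × ℤ)) {t : ℝ} (h0 : 0 ≤ t) {f : ℤ × ℤ → ℝ} {K : ℝ}
    (hf : ∀ p, |f p| ≤ K) (n : ℕ) (p : ℤ × ℤ) :
    ‖t ^ n * (TT V ^ n) f p‖ ≤ K * (4 * t) ^ n := by
  rw [norm_mul, Real.norm_eq_abs, Real.norm_eq_abs, abs_of_nonneg (pow_nonneg h0 n), mul_pow]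
  have := mul_le_mul_of_nonneg_left (TT_pow_abs V hf n p) (pow_nonneg h0 n)
  linarith

theorem geo_summable {t : ℝ} (h0 : 0 ≤ t) (h1 : t < 1/4) (K : ℝ) :
    Summable fun n : ℕ => K * (4 * t) ^ n :=
  (summable_geometric_of_lt_one (by linarith) (by linarith)).mul_left K

theorem RR_summable (V : Set (ℤ × ℤ)) {t : ℝ} (h0 : 0 ≤ t) (h1 : t < 1/4) {f : ℤ × ℤ → ℝ} {K : ℝ}
    (hf : ∀ p, |f p| ≤ K) (p : ℤ × ℤ) : Summable fun n : ℕ => t ^ n * (TT V ^ n) f p :=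
  Summable.of_norm_bounded (geo_summable h0 h1 K) (fun n => RR_bound V h0 hf n p)

theorem RR_abs (V : Set (ℤ × ℤ)) {t : ℝ} (h0 : 0 ≤ t) (h1 : t < 1/4) {f : ℤ × ℤ → ℝ} {K : ℝ}
    (hf : ∀ p, |f p| ≤ K) (p : ℤ × ℤ) : |RR V t f p| ≤ K / (1 - 4 * t) := by
  have := tsum_of_norm_bounded ((hasSum_geometric_of_lt_one (r := 4 * t) (by linarith)
    (by linarith)).mul_left K) (fun n => RR_bound V h0 hf n p)
  rwa [← div_eq_mul_inv] at this

theorem RR_eq (V : Set (ℤ × ℤ)) {t : ℝ} (h0 : 0 ≤ t) (h1 : t < 1/4) {f : ℤ × ℤ → ℝ} {K : ℝ}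
    (hf : ∀ p, |f p| ≤ K) (p : ℤ × ℤ) : RR V t f p = f p + t * TT V (RR V t f) p := by
  have hs := RR_summable V h0 h1 hf
  have hi : ∀ q, HasSum (fun n : ℕ => t ^ n * Vᶜ.indicator ((TT V ^ n) f) q)
      (Vᶜ.indicator (RR V t f) q) := by
    intro q
    by_cases hq : q ∈ V
    · simp [hq]
    · simpa [hq, RR] using (hs q).hasSum
  have h2 : HasSum (fun n : ℕ => t ^ n * TT V ((TT V ^ n) f) p) (TT V (RR V t f) p) := by
    have := (((hi (p + (1,0))).add (hi (p + (-1,0)))).add (hi (p + (0,1)))).add (hi (p + (0,-1)))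
    rw [TT_apply]
    convert this using 2 with n
    rw [TT_apply]
    ring
  rw [RR, (hs p).tsum_eq_zero_add]
  simp only [pow_zero, Module.End.one_apply, one_mul, TT_pow_succ]
  rw [← (h2.mul_left t).tsum_eq]
  congr 2
  funext n
  ring

theorem uniq (V : Set (ℤ × ℤ)) {t : ℝ} (h0 : 0 ≤ t) (h1 : t < 1/4) {e : ℤ × ℤ → ℝ} {K : ℝ}
    (hK : ∀ p, |e p| ≤ K) (he : ∀ p, e p = t * TT V e p) (p : ℤ × ℤ) : e p = 0 := by
  have h : ∀ n p, |e p| ≤ (4 * t) ^ n * K := by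
    intro n
    induction n with
    | zero => simpa using hK
    | succ n ih =>
      intro p
      rw [he p, abs_mul, abs_of_nonneg h0]
      have := mul_le_mul_of_nonneg_left (TT_abs V ih p) h0
      calc _ ≤ _ := this
        _ = _ := by ring
  have hl : Tendsto (fun n : ℕ => (4 * t) ^ n * K) atTop (nhds (0 * K)) :=
    (tendsto_pow_atTop_nhds_zero_of_lt_one (by linarith) (by linarith)).mul_const K
  have := ge_of_tendsto' hl (fun n => h n p)
  rw [zero_mul] at this
  exact abs_eq_zero.mp (le_antisymm this (abs_nonneg _))

theorem dl_abs (q p : ℤ × ℤ) : |dl q p| ≤ 1 := by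
  unfold dl
  rw [Pi.single_apply]
  split_ifs <;> simp

theorem dl_nonneg (q p : ℤ × ℤ) : 0 ≤ dl q p := by
  unfold dl
  rw [Pi.single_apply]
  split_ifs <;> simp

theorem eta_abs (q p : ℤ × ℤ) : |eta q p| ≤ 4 := by
  simp only [eta, Pi.add_apply]
  have := abs_add_le (dl (q + (1,0)) p + dl (q + (-1,0)) p + dl (q + (0,1)) p) (dl (q + (0,-1)) p)
  have := abs_add_le (dl (q + (1,0)) p + dl (q + (-1,0)) p) (dl (q + (0,1)) p)
  have := abs_add_le (dl (q + (1,0)) p) (dl (q + (-1,0)) p)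
  linarith [dl_abs (q + (1,0)) p, dl_abs (q + (-1,0)) p, dl_abs (q + (0,1)) p, dl_abs (q + (0,-1)) p]

theorem one_abs (p : ℤ × ℤ) : |(1 : ℤ × ℤ → ℝ) p| ≤ 1 := by simp

theorem dl_shift (q s p : ℤ × ℤ) : dl q (p + s) = dl (q + -s) p := by
  unfold dl
  simp only [Pi.single_apply]
  congr 1
  rw [eq_iff_iff]
  constructor
  · rintro rfl; simp
  · rintro rfl; simp

theorem eta_eq (q p : ℤ × ℤ) :
    eta q p = dl q (p + (1,0)) + dl q (p + (-1,0)) + dl q (p + (0,1)) + dl q (p + (0,-1)) := by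
  simp only [dl_shift, eta, Pi.add_apply]
  simp
  ring

theorem TT_dl (V : Set (ℤ × ℤ)) (q : ℤ × ℤ) (hq : q ∉ V) : TT V (dl q) = eta q := by
  have : Vᶜ.indicator (dl q) = dl q := by
    rw [Set.indicator_eq_self]
    intro x hx
    have : x = q := by
      by_contra h
      simp [dl, h] at hx
    rw [this]; exact hq
  funext p
  rw [TT_apply, this, eta_eq]

theorem TT_dl_mem (V : Set (ℤ × ℤ)) (q : ℤ × ℤ) (hq : q ∈ V) : TT V (dl q) = 0 := by
  have : Vᶜ.indicator (dl q) = 0 := by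
    funext x
    by_cases h : x = q
    · subst h; simp [hq]
    · by_cases hx : x ∈ V <;> simp [hx, dl, h]
  funext p
  rw [TT_apply, this]
  simp

theorem TT_pow_dl_mem (V : Set (ℤ × ℤ)) (q : ℤ × ℤ) (hq : q ∈ V) (n : ℕ) :
    (TT V ^ (n+1)) (dl q) = 0 := by
  rw [TT_pow_succ', TT_dl_mem V q hq, map_zero]

theorem TT_insert (V : Set (ℤ × ℤ)) (a : ℤ × ℤ) (ha : a ∉ V) (f : ℤ × ℤ → ℝ) (p : ℤ × ℤ) :
    TT V f p = TT (V ∪ {a}) f p + f a * eta a p := by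
  have h : ∀ q, Vᶜ.indicator f q = (V ∪ {a})ᶜ.indicator f q + f a * dl a q := by
    intro q
    by_cases hq : q = a
    · subst hq; simp [ha, dl]
    · by_cases hV : q ∈ V <;> simp [hq, hV, dl]
  rw [TT_apply, TT_apply, h, h, h, h, eta_eq]
  ring

/-- first hit decomposition at one point -/
theorem decomp (V : Set (ℤ × ℤ)) (a : ℤ × ℤ) (ha : a ∉ V) {t : ℝ} (h0 : 0 ≤ t) (h1 : t < 1/4)
    {f : ℤ × ℤ → ℝ} {K : ℝ} (hf : ∀ p, |f p| ≤ K) (p : ℤ × ℤ) :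
    RR V t f p = RR (V ∪ {a}) t f p + t * RR (V ∪ {a}) t (eta a) p * RR V t f a := by
  set W := V ∪ {a} with hW
  set c := RR V t f a with hc
  set e : ℤ × ℤ → ℝ := RR V t f - RR W t f - (t * c) • RR W t (eta a) with he
  have hbd : ∀ p, |e p| ≤ K / (1 - 4 * t) + K / (1 - 4 * t) + |t * c| * (4 / (1 - 4 * t)) := by
    intro p
    simp only [he, Pi.sub_apply, Pi.smul_apply, smul_eq_mul]
    have a1 := RR_abs V h0 h1 hf p
    have a2 := RR_abs W h0 h1 hf p
    have a3 := mul_le_mul_of_nonneg_left (RR_abs W h0 h1 (eta_abs a) p) (abs_nonneg (t * c))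
    rw [← abs_mul] at a3
    have a4 := abs_sub (RR V t f p - RR W t f p) (t * c * RR W t (eta a) p)
    have a5 := abs_sub (RR V t f p) (RR W t f p)
    linarith
  have heq : ∀ p, e p = t * TT W e p := by
    intro p
    have : TT W e p = TT W (RR V t f) p - TT W (RR W t f) p - (t * c) * TT W (RR W t (eta a)) p := by
      rw [he, map_sub, map_sub, map_smul]; rfl
    rw [this]
    simp only [he, Pi.sub_apply, Pi.smul_apply, smul_eq_mul]
    rw [RR_eq V h0 h1 hf p, RR_eq W h0 h1 hf p, RR_eq W h0 h1 (eta_abs a) p, TT_insert V a ha]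
    rw [← hW, ← hc]
    ring
  have := uniq W h0 h1 hbd heq p
  simp only [he, Pi.sub_apply, Pi.smul_apply, smul_eq_mul] at this
  linarith

theorem TT_shift (V : Set (ℤ × ℤ)) (a : ℤ × ℤ) (f : ℤ × ℤ → ℝ) (n : ℕ) (p : ℤ × ℤ) :
    (TT V ^ n) f (p + a) = (TT {q | q + a ∈ V} ^ n) (fun q => f (q + a)) p := by
  induction n generalizing p with
  | zero => simp
  | succ n ih =>
    have h : ∀ s, Vᶜ.indicator ((TT V ^ n) f) (p + a + s) =
        {q | q + a ∈ V}ᶜ.indicator ((TT {q | q + a ∈ V} ^ n) (fun q => f (q + a))) (p + s) := by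
      intro s
      by_cases hV : p + s + a ∈ V
      · have : p + a + s ∈ V := by rwa [add_right_comm]
        simp [hV, this]
      · have h2 : p + a + s ∉ V := by rwa [add_right_comm]
        simp only [Set.mem_compl_iff, h2, hV, not_false_eq_true, Set.indicator_of_mem, Set.mem_ofPred_eq]
        rw [add_right_comm, ih]
    rw [TT_pow_succ, TT_pow_succ, TT_apply, TT_apply, h, h, h, h]

theorem RR_shift (V : Set (ℤ × ℤ)) (a : ℤ × ℤ) (t : ℝ) (f : ℤ × ℤ → ℝ) (p : ℤ × ℤ) :
    RR V t f (p + a) = RR {q | q + a ∈ V} t (fun q => f (q + a)) p := by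
  simp only [RR, TT_shift]

theorem TT_pow_zero_of_mem (V : Set (ℤ × ℤ)) (v q : ℤ × ℤ) (hv : v ∈ V) (hq : q ∉ V) (n : ℕ) :
    (TT V ^ n) (dl v) q = 0 := by
  cases n with
  | zero =>
    have : q ≠ v := fun h => hq (h ▸ hv)
    simp [dl, this]
  | succ n => rw [TT_pow_dl_mem V v hv]; rfl

theorem TT_eta (V : Set (ℤ × ℤ)) (n : ℕ) (q p : ℤ × ℤ) : (TT V ^ n) (eta q) p =
    (TT V ^ n) (dl (q + (1,0))) p + (TT V ^ n) (dl (q + (-1,0))) p +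
    (TT V ^ n) (dl (q + (0,1))) p + (TT V ^ n) (dl (q + (0,-1))) p := by
  simp only [eta, map_add, Pi.add_apply]

theorem TT_symm (V : Set (ℤ × ℤ)) (n : ℕ) (p q : ℤ × ℤ) (hp : p ∉ V) (hq : q ∉ V) :
    (TT V ^ n) (dl q) p = (TT V ^ n) (dl p) q := by
  induction n generalizing p with
  | zero => simp [dl, Pi.single_apply, eq_comm]
  | succ n ih =>
    have h : ∀ s, Vᶜ.indicator ((TT V ^ n) (dl q)) (p + s) = (TT V ^ n) (dl (p + s)) q := by
      intro s
      by_cases hs : p + s ∈ V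
      · rw [TT_pow_zero_of_mem V _ q hs hq]; simp [hs]
      · simp [hs, ih _ hs]
    rw [TT_pow_succ, TT_apply, h, h, h, h, TT_pow_succ', TT_dl V p hp, TT_eta]

/-- reversal -/
theorem TT_rev (V : Set (ℤ × ℤ)) (n : ℕ) (p q : ℤ × ℤ) (hq : q ∉ V) :
    (TT V ^ (n+1)) (dl q) p = (TT V ^ n) (eta p) q := by
  have h : ∀ s, Vᶜ.indicator ((TT V ^ n) (dl q)) (p + s) = (TT V ^ n) (dl (p + s)) q := by
      intro s
      by_cases hs : p + s ∈ V
      · rw [TT_pow_zero_of_mem V _ q hs hq]; simp [hs]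
      · simp [hs, TT_symm V n _ _ hs hq]
  rw [TT_pow_succ, TT_apply, h, h, h, h, TT_eta]

theorem RR_symm (V : Set (ℤ × ℤ)) (t : ℝ) (p q : ℤ × ℤ) (hp : p ∉ V) (hq : q ∉ V) :
    RR V t (dl q) p = RR V t (dl p) q := by
  simp only [RR, TT_symm V _ p q hp hq]

theorem RR_rev (V : Set (ℤ × ℤ)) {t : ℝ} (h0 : 0 ≤ t) (h1 : t < 1/4) (p q : ℤ × ℤ) (hq : q ∉ V)
    (hpq : p ≠ q) : RR V t (dl q) p = t * RR V t (eta p) q := by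
  rw [RR, (RR_summable V h0 h1 (dl_abs q) p).tsum_eq_zero_add]
  simp only [TT_rev V _ p q hq]
  have : dl q p = 0 := by simp [dl, hpq]
  simp only [pow_zero, Module.End.one_apply, this, mul_zero, zero_add, RR]
  rw [← tsum_mul_left]
  congr 1
  funext n
  ring

end SlitPf
namespace SlitPf

theorem slitH_iff (p : ℤ × ℤ) : p ∈ slitH ↔ p.2 = 0 ∧ p.1 ≤ 0 := Iff.rfl

/-- axis GF -/
noncomputable def AA (t : ℝ) (k : ℕ) : ℝ := RR slitH t (dl ((k : ℤ),0)) (0,0)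
/-- survival GF from `(k,0)` -/
noncomputable def BB (t : ℝ) (k : ℕ) : ℝ := RR slitH t 1 ((k : ℤ),0)
/-- first return to `H` at the origin, from `(k,0)` -/
noncomputable def FF (t : ℝ) (k : ℕ) : ℝ := t * RR slitH t (eta (0,0)) ((k : ℤ),0)
/-- loops at `(1,0)` -/
noncomputable def LL (t : ℝ) : ℝ := RR slitH t (dl (1,0)) (1,0)

theorem notMem_slitH (k : ℕ) (hk : 1 ≤ k) : (((k : ℕ) : ℤ), (0:ℤ)) ∉ slitH := by
  rw [slitH_iff]; simp; omega

theorem FF_eq_AA {t : ℝ} (h0 : 0 ≤ t) (h1 : t < 1/4) (k : ℕ) (hk : 1 ≤ k) : FF t k = AA t k := by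
  unfold FF AA
  rw [RR_rev slitH h0 h1 (0,0) _ (notMem_slitH k hk)]
  intro h
  rw [Prod.mk.injEq] at h
  omega

theorem AA_zero (t : ℝ) : AA t 0 = 1 := by
  unfold AA RR
  rw [tsum_eq_single 0]
  · simp [dl]
  · intro n hn
    obtain ⟨m, rfl⟩ := Nat.exists_eq_succ_of_ne_zero hn
    rw [Nat.succ_eq_add_one, TT_pow_dl_mem]
    · simp
    · simp [slitH_iff]

theorem slit_shift : {q : ℤ × ℤ | q + (1,0) ∈ slitH ∪ {(1,0)}} = slitH := by
  ext q
  obtain ⟨a, b⟩ := q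
  simp only [Set.mem_ofPred_eq, Set.mem_union, slitH_iff, Set.mem_singleton_iff, Prod.mk_add_mk, Prod.mk.injEq]
  omega

theorem RR_slit_shift (t : ℝ) (f : ℤ × ℤ → ℝ) (k : ℕ) :
    RR (slitH ∪ {(1,0)}) t f (((k + 1 : ℕ) : ℤ), 0) = RR slitH t (fun q => f (q + (1,0))) ((k : ℤ), 0) := by
  have := RR_shift (slitH ∪ {(1,0)}) (1,0) t f ((k : ℤ),0)
  rw [slit_shift] at this
  rw [← this]
  simp

theorem one_notMem : ((1:ℤ),(0:ℤ)) ∉ slitH := by simp [slitH_iff]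

theorem eta_shift : (fun q => eta (1,0) (q + (1,0))) = eta (0,0) := by
  funext q
  simp only [eta, Pi.add_apply, dl_shift]
  simp

theorem dl_slit_shift (k : ℕ) : (fun q => dl (((k+1 : ℕ) : ℤ),0) (q + (1,0))) = dl ((k : ℤ),0) := by
  funext q
  simp [dl_shift]

theorem decomp1 {t : ℝ} (h0 : 0 ≤ t) (h1 : t < 1/4) {f : ℤ × ℤ → ℝ} {K : ℝ}
    (hf : ∀ p, |f p| ≤ K) (k : ℕ) :
    RR slitH t f (((k + 1 : ℕ) : ℤ), 0) = RR slitH t (fun q => f (q + (1,0))) ((k : ℤ), 0) +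
      FF t k * RR slitH t f (1,0) := by
  rw [decomp slitH (1,0) one_notMem h0 h1 hf, RR_slit_shift, RR_slit_shift, eta_shift]
  rfl

theorem BB_succ {t : ℝ} (h0 : 0 ≤ t) (h1 : t < 1/4) (k : ℕ) :
    BB t (k+1) = BB t k + FF t k * BB t 1 := by
  have := decomp1 h0 h1 one_abs k
  unfold BB
  rw [this]
  rfl

theorem RR_dl_mem (V : Set (ℤ × ℤ)) (t : ℝ) (p q : ℤ × ℤ) (hq : q ∈ V) (hpq : p ≠ q) :
    RR V t (dl q) p = 0 := by
  unfold RR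
  rw [← tsum_zero (β := ℕ)]
  congr 1
  funext n
  cases n with
  | zero => simp [dl, hpq]
  | succ n => rw [TT_pow_dl_mem V q hq]; simp

theorem LL_eq {t : ℝ} (h0 : 0 ≤ t) (h1 : t < 1/4) : LL t * (1 - FF t 0) = 1 := by
  have := decomp1 h0 h1 (dl_abs (((0 + 1 : ℕ) : ℤ),0)) 0
  rw [dl_slit_shift] at this
  have h2 := AA_zero t
  unfold AA at h2
  simp only [Nat.cast_zero] at h2
  simp only [zero_add, Nat.cast_one, Nat.cast_zero, h2] at this
  unfold LL
  linarith

theorem GG_one {t : ℝ} (h0 : 0 ≤ t) (h1 : t < 1/4) (k : ℕ) (hk : 1 ≤ k) :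
    RR slitH t (dl (((k+1 : ℕ) : ℤ),0)) (1,0) = AA t k * LL t := by
  rw [RR_symm slitH t _ _ one_notMem (notMem_slitH (k+1) (by omega))]
  have := decomp1 h0 h1 (dl_abs (((0 + 1 : ℕ) : ℤ),0)) k
  rw [dl_slit_shift] at this
  rw [RR_dl_mem slitH t ((k : ℤ),0) (((0 : ℕ) : ℤ),0) (by simp [slitH_iff]) (by simp; omega), FF_eq_AA h0 h1 k hk] at this
  simp only [zero_add, Nat.cast_one] at this
  rw [this]; rfl

theorem GG_diag {t : ℝ} (h0 : 0 ≤ t) (h1 : t < 1/4) (k : ℕ) :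
    RR slitH t (dl (((k+1 : ℕ) : ℤ),0)) (((k+1 : ℕ) : ℤ),0)
      = LL t * ∑ l ∈ Finset.range (k+1), AA t l ^ 2 := by
  induction k with
  | zero => simp [AA_zero, LL]
  | succ k ih =>
    rw [decomp1 h0 h1 (dl_abs _), dl_slit_shift, ih, GG_one h0 h1 _ (by omega),
      FF_eq_AA h0 h1 _ (by omega), Finset.sum_range_succ _ (k+1)]
    ring

theorem BB_eq {t : ℝ} (h0 : 0 ≤ t) (h1 : t < 1/4) (k : ℕ) :
    BB t (k+1) = LL t * BB t 0 * ∑ l ∈ Finset.range (k+1), AA t l := by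
  have hL := LL_eq h0 h1
  have h := BB_succ h0 h1 0
  have hB : BB t 1 = LL t * BB t 0 := by
    rw [zero_add] at h
    calc BB t 1 = (LL t * (1 - FF t 0)) * BB t 1 := by rw [hL, one_mul]
      _ = LL t * (BB t 1 - FF t 0 * BB t 1) := by ring
      _ = _ := by rw [show BB t 1 - FF t 0 * BB t 1 = BB t 0 by linarith]
  induction k with
  | zero => simp [AA_zero, hB]
  | succ k ih =>
    rw [BB_succ h0 h1, ih, FF_eq_AA h0 h1 _ (by omega), Finset.sum_range_succ _ (k+1), hB]
    ring

/-- nonvisiting walks -/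
theorem nonvisit_GF {t : ℝ} (h0 : 0 ≤ t) (h1 : t < 1/4) (k : ℕ) (hk : 1 ≤ k) :
    (LL t * ∑ l ∈ Finset.range k, AA t l ^ 2) * RR (slitH ∪ {((k : ℤ),0)}) t 1 (0,0)
    = (LL t * ∑ l ∈ Finset.range k, AA t l ^ 2) * BB t 0 - AA t k * BB t k := by
  obtain ⟨j, rfl⟩ := Nat.exists_eq_add_of_le' hk
  have e1 := decomp slitH (((j+1 : ℕ) : ℤ),0) (notMem_slitH _ hk) h0 h1 one_abs (0,0)
  have e2 := decomp slitH (((j+1 : ℕ) : ℤ),0) (notMem_slitH _ hk) h0 h1 (dl_abs (((j+1 : ℕ) : ℤ),0)) (0,0)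
  rw [RR_dl_mem (slitH ∪ {(((j+1 : ℕ) : ℤ),0)}) _ _ _ (by simp) (by simp; omega), GG_diag h0 h1] at e2
  have e3 : AA t (j+1) = RR slitH t (dl (((j+1 : ℕ) : ℤ),0)) (0,0) := rfl
  have e4 : BB t 0 = RR slitH t 1 (0,0) := rfl
  have e5 : BB t (j+1) = RR slitH t 1 (((j+1 : ℕ) : ℤ),0) := rfl
  rw [← e3] at e2
  rw [← e4, ← e5] at e1
  rw [e1, e2]
  ring

theorem RR_nonneg (V : Set (ℤ × ℤ)) {t : ℝ} (h0 : 0 ≤ t) {f : ℤ × ℤ → ℝ} (hf : ∀ p, 0 ≤ f p)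
    (p : ℤ × ℤ) : 0 ≤ RR V t f p :=
  tsum_nonneg fun n => mul_nonneg (pow_nonneg h0 n) (TT_pow_nonneg V hf n p)

theorem AA_nonneg {t : ℝ} (h0 : 0 ≤ t) (k : ℕ) : 0 ≤ AA t k := RR_nonneg _ h0 (dl_nonneg _) _

theorem LL_pos {t : ℝ} (h0 : 0 ≤ t) (h1 : t < 1/4) : 0 < LL t := by
  have h := LL_eq h0 h1
  have h2 : 0 ≤ LL t := RR_nonneg _ h0 (dl_nonneg _) _
  rcases h2.eq_or_lt with h3 | h3
  · rw [← h3] at h; simp at h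
  · exact h3

theorem surv_far (n : ℕ) : ∀ k : ℤ × ℤ, (n : ℤ) < k.1 → (TT slitH ^ n) 1 k = 4 ^ n := by
  induction n with
  | zero => intro k _; simp
  | succ n ih =>
    intro k hk
    push_cast at hk
    have h : ∀ s : ℤ × ℤ, -1 ≤ s.1 → slitHᶜ.indicator ((TT slitH ^ n) 1) (k + s) = 4 ^ n := by
      intro s hs
      have hh : k + s ∉ slitH := by
        rw [slitH_iff, Prod.fst_add]; omega
      rw [Set.indicator_of_mem (by simpa using hh)]
      apply ih
      rw [Prod.fst_add]; omega
    rw [TT_pow_succ, TT_apply, h _ (by simp), h _ (by simp), h _ (by simp), h _ (by simp)]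
    ring

theorem BB_tendsto {t : ℝ} (h0 : 0 ≤ t) (h1 : t < 1/4) :
    Tendsto (fun k => BB t k) atTop (nhds (1 / (1 - 4 * t))) := by
  have : 1 / (1 - 4 * t) = ∑' n : ℕ, (4 * t) ^ n := by
    rw [tsum_geometric_of_lt_one (by linarith) (by linarith), one_div]
  rw [this]
  refine tendsto_tsum_of_dominated_convergence (bound := fun n => 1 * (4 * t) ^ n)
    (geo_summable h0 h1 1) ?_ ?_
  · intro n
    apply tendsto_const_nhds.congr'
    filter_upwards [eventually_gt_atTop n] with k hk
    rw [surv_far n _ (Int.ofNat_lt.mpr hk), mul_pow]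
    ring
  · exact Eventually.of_forall fun k n => RR_bound slitH h0 one_abs n _

theorem BB_pos {t : ℝ} (h0 : 0 ≤ t) (h1 : t < 1/4) (k : ℕ) : 0 < BB t k := by
  have hs := RR_summable slitH h0 h1 one_abs ((k : ℤ),0)
  have := hs.le_tsum 0 (fun n _ => mul_nonneg (pow_nonneg h0 n) (TT_pow_nonneg _ (by simp) n _))
  simp only [pow_zero, Module.End.one_apply, Pi.one_apply, mul_one] at this
  exact lt_of_lt_of_le one_pos this

theorem AA_hasSum {t : ℝ} (h0 : 0 ≤ t) (h1 : t < 1/4) :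
    HasSum (AA t) (1 / ((1 - 4 * t) * (LL t * BB t 0))) := by
  have hp : 0 < LL t * BB t 0 := mul_pos (LL_pos h0 h1) (BB_pos h0 h1 0)
  rw [hasSum_iff_tendsto_nat_of_nonneg (AA_nonneg h0)]
  have h := ((BB_tendsto h0 h1).comp (tendsto_add_atTop_nat 1)).div_const (LL t * BB t 0)
  rw [← tendsto_add_atTop_iff_nat 1]
  rw [div_div] at h
  refine h.congr fun k => ?_
  simp only [Function.comp_apply]
  rw [BB_eq h0 h1 k, mul_div_cancel_left₀ _ hp.ne']

end SlitPf
namespace SlitPf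

theorem int_exp (c : ℂ) (i : ℤ) :
    ∫ θ in (0:ℝ)..(2 * Real.pi), c * Complex.exp (Complex.I * i * θ) = if i = 0 then 2 * Real.pi * c else 0 := by
  rw [intervalIntegral.integral_const_mul]
  split_ifs with h
  · subst h; simp; ring
  · have hi : Complex.I * i ≠ 0 := mul_ne_zero Complex.I_ne_zero (by exact_mod_cast h)
    rw [integral_exp_mul_complex hi]
    have : Complex.exp (Complex.I * i * (2 * Real.pi : ℝ)) = 1 := by
      rw [Complex.exp_eq_one_iff]
      exact ⟨i, by push_cast; ring⟩
    rw [this]; simp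

theorem fourier_zero (c : ℤ → ℂ) (hs : Summable fun i => ‖c i‖)
    (h : ∀ θ : ℝ, HasSum (fun i => c i * Complex.exp (Complex.I * i * θ)) 0) (k : ℤ) : c k = 0 := by
  have key : HasSum (fun i : ℤ => ∫ θ in (0:ℝ)..(2 * Real.pi), c i * Complex.exp (Complex.I * ((i - k : ℤ) : ℂ) * θ))
      (∫ θ in (0:ℝ)..(2 * Real.pi), (0 : ℂ)) := by
    apply intervalIntegral.hasSum_integral_of_dominated_convergence (fun i _ => ‖c i‖)
    · intro i
      apply Continuous.aestronglyMeasurable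
      fun_prop
    · intro i
      refine Filter.Eventually.of_forall fun θ _ => ?_
      rw [norm_mul, show Complex.I * ((i - k : ℤ) : ℂ) * (θ:ℂ) = (((i - k : ℤ) : ℝ) * θ : ℝ) * Complex.I by push_cast; ring,
        Complex.norm_exp_ofReal_mul_I, mul_one]
    · exact Filter.Eventually.of_forall fun θ _ => hs
    · exact intervalIntegrable_const
    · refine Filter.Eventually.of_forall fun θ _ => ?_
      have := (h θ).mul_right (Complex.exp (-(Complex.I * k * θ)))
      rw [zero_mul] at this
      refine this.congr_fun ?_
      intro i
      rw [mul_assoc (c i), ← Complex.exp_add]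
      congr 2; push_cast; ring
  simp only [int_exp] at key
  rw [intervalIntegral.integral_zero] at key
  have h2 : HasSum (fun i : ℤ => if i - k = 0 then 2 * Real.pi * c i else 0) (2 * Real.pi * c k) := by
    have := hasSum_single (f := fun i : ℤ => if i - k = 0 then 2 * Real.pi * c i else 0) k (by
      intro i hi
      rw [if_neg (by omega)])
    simpa using this
  have := key.unique h2
  have hp : (2 * Real.pi : ℂ) ≠ 0 := by
    exact_mod_cast (by positivity : (2 * Real.pi) ≠ 0)
  simpa [hp, Real.pi_ne_zero] using this.symm

structure Plus (φ : PowerSeries ℂ) (f : ℂ → ℂ) : Prop where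
  sm : Summable fun n => ‖PowerSeries.coeff n φ‖
  hs : ∀ x : ℂ, ‖x‖ = 1 → HasSum (fun n => PowerSeries.coeff n φ * x ^ n) (f x)

theorem Plus.of_eq {φ : PowerSeries ℂ} {f g : ℂ → ℂ} (h : Plus φ f) (e : ∀ x, ‖x‖ = 1 → f x = g x) : Plus φ g :=
  ⟨h.sm, fun x hx => e x hx ▸ h.hs x hx⟩

theorem Plus.nsm {φ : PowerSeries ℂ} {f : ℂ → ℂ} (h : Plus φ f) (x : ℂ) (hx : ‖x‖ = 1) :
    Summable fun n => ‖PowerSeries.coeff n φ * x ^ n‖ := by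
  simpa [hx] using h.sm

theorem Plus.mul {φ ψ : PowerSeries ℂ} {f g : ℂ → ℂ} (h : Plus φ f) (k : Plus ψ g) :
    Plus (φ * ψ) (fun x => f x * g x) := by
  constructor
  · simp only [PowerSeries.coeff_mul]
    exact summable_norm_sum_mul_antidiagonal_of_summable_norm (f := fun n => PowerSeries.coeff n φ)
      (g := fun n => PowerSeries.coeff n ψ) h.sm k.sm
  · intro x hx
    have hc : ∀ n, PowerSeries.coeff n (φ * ψ) * x ^ n = ∑ kl ∈ Finset.HasAntidiagonal.antidiagonal n,
        (PowerSeries.coeff kl.1 φ * x ^ kl.1) * (PowerSeries.coeff kl.2 ψ * x ^ kl.2) := by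
      intro n
      rw [PowerSeries.coeff_mul, Finset.sum_mul]
      refine Finset.sum_congr rfl fun kl hkl => ?_
      rw [← Finset.HasAntidiagonal.mem_antidiagonal.mp hkl, pow_add]; ring
    simp only [hc]
    have h1 := summable_norm_sum_mul_antidiagonal_of_summable_norm (h.nsm x hx) (k.nsm x hx)
    have h2 := tsum_mul_tsum_eq_tsum_sum_antidiagonal_of_summable_norm (h.nsm x hx) (k.nsm x hx)
    rw [(h.hs x hx).tsum_eq, (k.hs x hx).tsum_eq] at h2
    rw [h2]
    exact h1.of_norm.hasSum

theorem Plus.lin (u : ℂ) : Plus (1 - PowerSeries.C u * PowerSeries.X) (fun x => 1 - u * x) := by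
  have hc : ∀ n, n ∉ Finset.range 2 → PowerSeries.coeff n (1 - PowerSeries.C u * PowerSeries.X : PowerSeries ℂ) = 0 := by
    intro n hn
    rw [Finset.mem_range] at hn
    rw [map_sub, PowerSeries.coeff_C_mul, PowerSeries.coeff_one, PowerSeries.coeff_X, if_neg (by omega), if_neg (by omega)]
    simp
  constructor
  · exact summable_of_ne_finset_zero (s := Finset.range 2) (fun n hn => by rw [hc n hn, norm_zero])
  · intro x hx
    have := hasSum_sum_of_ne_finset_zero (L := SummationFilter.unconditional ℕ) (f := fun n => PowerSeries.coeff n (1 - PowerSeries.C u * PowerSeries.X : PowerSeries ℂ) * x ^ n) (s := Finset.range 2)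
      (fun n hn => by rw [hc n hn, zero_mul])
    convert this using 1
    simp [Finset.sum_range_succ, PowerSeries.coeff_one, PowerSeries.coeff_X]
    ring

theorem Plus.geo (u : ℂ) (hu : ‖u‖ < 1) : Plus (PowerSeries.mk fun n => u ^ n) (fun x => (1 - u * x)⁻¹) := by
  constructor
  · simp only [PowerSeries.coeff_mk, norm_pow]
    exact summable_geometric_of_lt_one (norm_nonneg _) hu
  · intro x hx
    simp only [PowerSeries.coeff_mk, ← mul_pow]
    exact hasSum_geometric_of_norm_lt_one (by simpa [hx] using hu)

theorem Plus.const (c : ℂ) : Plus (PowerSeries.C c) (fun _ => c) := by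
  constructor
  · exact summable_of_ne_finset_zero (s := {0}) (fun n hn => by
      rw [PowerSeries.coeff_C, if_neg (by simpa using hn), norm_zero])
  · intro x hx
    have := hasSum_single (f := fun n => PowerSeries.coeff n (PowerSeries.C c) * x ^ n) 0 (fun n hn => by
      rw [PowerSeries.coeff_C, if_neg (by simpa using hn), zero_mul])
    simpa using this

theorem nat_to_int (a : ℕ → ℂ) (F : ℤ → ℂ) (hF : ∀ n : ℕ, F n = a n) (hF0 : ∀ i : ℤ, i < 0 → F i = 0) (s : ℂ) :
    HasSum a s ↔ HasSum F s := by
  have : a = F ∘ (fun n : ℕ => (n : ℤ)) := by funext n; exact (hF n).symm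
  rw [this]
  apply Function.Injective.hasSum_iff Nat.cast_injective
  intro i hi
  apply hF0
  by_contra h
  exact hi ⟨i.toNat, by simp; omega⟩

theorem exp_zpow (i : ℤ) (θ : ℝ) : Complex.exp (Complex.I * i * θ) = Complex.exp (θ * Complex.I) ^ i := by
  rw [← Complex.exp_int_mul]; congr 1; ring

theorem norm_exp1 (θ : ℝ) : ‖Complex.exp (θ * Complex.I)‖ = 1 := Complex.norm_exp_ofReal_mul_I θ

theorem plus_minus {φ ψ : PowerSeries ℂ} {f g : ℂ → ℂ} (h : Plus φ f) (k : Plus ψ g)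
    (e : ∀ x, ‖x‖ = 1 → f x = g x⁻¹) :
    (∀ n, 1 ≤ n → PowerSeries.coeff n φ = 0) ∧ PowerSeries.coeff 0 φ = PowerSeries.coeff 0 ψ := by
  let a : ℤ → ℂ := fun i => if 0 ≤ i then PowerSeries.coeff i.toNat φ else 0
  let b : ℤ → ℂ := fun i => if 0 ≤ i then PowerSeries.coeff i.toNat ψ else 0
  have ha : Summable fun i => ‖a i‖ := by
    have : Function.Injective (fun n : ℕ => (n : ℤ)) := Nat.cast_injective
    refine (this.summable_iff (f := fun i => ‖a i‖) ?_).mp ?_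
    · intro i hi
      have : ¬ 0 ≤ i := fun h => hi ⟨i.toNat, by simp; omega⟩
      simp [a, this]
    · simpa [Function.comp_def, a] using h.sm
  have hb : Summable fun i => ‖b i‖ := by
    have : Function.Injective (fun n : ℕ => (n : ℤ)) := Nat.cast_injective
    refine (this.summable_iff (f := fun i => ‖b i‖) ?_).mp ?_
    · intro i hi
      have : ¬ 0 ≤ i := fun h => hi ⟨i.toNat, by simp; omega⟩
      simp [b, this]
    · simpa [Function.comp_def, b] using k.sm
  have hb' : Summable fun i => ‖b (-i)‖ := (Equiv.neg ℤ).summable_iff (f := fun i => ‖b i‖) |>.mpr hb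
  have key := fourier_zero (fun i => a i - b (-i))
    (Summable.of_nonneg_of_le (fun _ => norm_nonneg _) (fun i => norm_sub_le _ _) (ha.add hb')) (by
    intro θ
    have hx := norm_exp1 θ
    set x := Complex.exp (θ * Complex.I) with hxd
    have hx' : ‖x⁻¹‖ = 1 := by simp [hx]
    have h1 : HasSum (fun i : ℤ => a i * x ^ i) (f x) := (nat_to_int _ _ (fun n => by simp [a]) (fun i hi => by
      simp [a, not_le.mpr hi]) _).mp (h.hs x hx)
    have h2 : HasSum (fun i : ℤ => b i * x⁻¹ ^ i) (g x⁻¹) := (nat_to_int _ _ (fun n => by simp [b]) (fun i hi => by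
      simp [b, not_le.mpr hi]) _).mp (k.hs x⁻¹ hx')
    have h3 : HasSum (fun i : ℤ => b (-i) * x ^ i) (g x⁻¹) := by
      have := (Equiv.neg ℤ).hasSum_iff.mpr h2
      simpa [Function.comp_def] using this
    have := h1.sub h3
    rw [e x hx, sub_self] at this
    simp only [exp_zpow, ← hxd, sub_mul]
    exact this)
  constructor
  · intro n hn
    have := key n
    simpa [a, b, show ¬ (n = 0) by omega] using this
  · have := key 0
    simpa [a, b, sub_eq_zero] using this

/-- Wiener–Hopf factorization uniqueness -/
theorem wh (A M : ℕ → ℂ) (hA : Summable fun n => ‖A n‖) (hM : Summable fun n => ‖M n‖) (c u v : ℂ)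
    (hu : ‖u‖ < 1) (hv : ‖v‖ < 1) (fA fM : ℂ → ℂ) (hfA : ∀ x, ‖x‖ = 1 → HasSum (fun n => A n * x ^ n) (fA x))
    (hfM : ∀ x, ‖x‖ = 1 → HasSum (fun n => M n * x ^ n) (fM x))
    (e : ∀ x, ‖x‖ = 1 → fA x ^ 2 * (c * (1 - u * x) * (1 - u * x⁻¹) * (1 - v * x) * (1 - v * x⁻¹)) = fM x⁻¹ ^ 2)
    (hA0 : A 0 = 1) (hc : c ≠ 0) :
    c = M 0 ^ 2 ∧ PowerSeries.mk A ^ 2 * ((1 - PowerSeries.C u * PowerSeries.X) * (1 - PowerSeries.C v * PowerSeries.X)) = 1 := by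
  have pA : Plus (PowerSeries.mk A) fA := ⟨by simpa using hA, by simpa using hfA⟩
  have pM : Plus (PowerSeries.mk M) fM := ⟨by simpa using hM, by simpa using hfM⟩
  have p1 := (Plus.const c).mul ((pA.mul pA).mul ((Plus.lin u).mul (Plus.lin v)))
  have p2 := (pM.mul pM).mul ((Plus.geo u hu).mul (Plus.geo v hv))
  have hne : ∀ w x : ℂ, ‖w‖ < 1 → ‖x‖ = 1 → 1 - w * x ≠ 0 := by
    intro w x hw hx h0
    have : w * x = 1 := (sub_eq_zero.mp h0).symm
    have := congrArg norm this
    rw [norm_mul, hx, norm_one] at this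
    linarith
  obtain ⟨h1, h0⟩ := plus_minus p1 p2 (by
    intro x hx
    have hx' : ‖x⁻¹‖ = 1 := by simp [hx]
    have n1 := hne u x⁻¹ hu hx'
    have n2 := hne v x⁻¹ hv hx'
    have := e x hx
    rw [show fM x⁻¹ * fM x⁻¹ = fM x⁻¹ ^ 2 by ring, ← this]
    rw [← mul_inv, eq_mul_inv_iff_mul_eq₀ (mul_ne_zero n1 n2)]
    ring)
  have hcc : ∀ f : ℕ → ℂ, PowerSeries.constantCoeff (PowerSeries.mk f) = f 0 := by
    intro f; rw [← PowerSeries.coeff_zero_eq_constantCoeff_apply, PowerSeries.coeff_mk]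
  have hc0 : c = M 0 ^ 2 := by
    simpa [hcc, hA0, PowerSeries.coeff_zero_eq_constantCoeff, ← pow_two] using h0
  refine ⟨hc0, ?_⟩
  ext n
  rw [PowerSeries.coeff_one]
  split_ifs with hn
  · subst hn
    simp [hA0, hcc, PowerSeries.coeff_zero_eq_constantCoeff]
  · have := h1 n (by omega)
    rw [PowerSeries.coeff_C_mul] at this
    rw [pow_two]
    exact (mul_eq_zero.mp this).resolve_left hc

end SlitPf
namespace SlitPf

noncomputable def ss (t : ℝ) (q : ℤ × ℤ) : ℝ := RR slitH t (dl q) (0,0)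

noncomputable def hh (t : ℝ) (q : ℤ × ℤ) : ℝ :=
  t * (ss t (q + (1,0)) + ss t (q + (-1,0)) + ss t (q + (0,1)) + ss t (q + (0,-1)))

theorem ss_nonneg {t : ℝ} (h0 : 0 ≤ t) (q : ℤ × ℤ) : 0 ≤ ss t q := RR_nonneg _ h0 (dl_nonneg _) _

theorem hh_eq {t : ℝ} (h0 : 0 ≤ t) (h1 : t < 1/4) (q : ℤ × ℤ) :
    t * RR slitH t (eta q) (0,0) = hh t q := by
  unfold hh ss RR
  congr 1
  have s := fun q => RR_summable slitH h0 h1 (dl_abs q) (0,0)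
  rw [← (s _).tsum_add (s _), ← ((s _).add (s _)).tsum_add (s _),
    ← (((s _).add (s _)).add (s _)).tsum_add (s _)]
  congr 1
  funext n
  rw [TT_eta]; ring

theorem ss_notMem {t : ℝ} (h0 : 0 ≤ t) (h1 : t < 1/4) (q : ℤ × ℤ) (hq : q ∉ slitH) : ss t q = hh t q := by
  rw [← hh_eq h0 h1, ss, RR, (RR_summable slitH h0 h1 (dl_abs q) (0,0)).tsum_eq_zero_add]
  simp only [TT_pow_succ', TT_dl slitH q hq]
  have : dl q (0,0) = 0 := by
    have : ((0:ℤ),(0:ℤ)) ≠ q := by rintro rfl; simp [slitH_iff] at hq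
    simp [dl, this]
  simp only [pow_zero, Module.End.one_apply, this, mul_zero, zero_add, RR]
  rw [← tsum_mul_left]
  congr 1
  funext n
  ring

theorem ss_mem (t : ℝ) (n : ℕ) : ss t (-(n:ℤ),0) = if n = 0 then 1 else 0 := by
  split_ifs with h
  · subst h
    have := AA_zero t
    simpa [ss, AA] using this
  · exact RR_dl_mem _ _ _ _ (by simp [slitH_iff]) (by simp; omega)

theorem ss_summable {t : ℝ} (h0 : 0 ≤ t) (h1 : t < 1/4) : Summable (ss t) := by
  apply summable_of_sum_le (c := 1 / (1 - 4 * t)) (ss_nonneg h0)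
  intro F
  have hb : ∀ p, |(∑ q ∈ F, dl q) p| ≤ 1 := by
    intro p
    have : (∑ q ∈ F, dl q) p = if p ∈ F then 1 else 0 := by
      simp [dl, Finset.sum_apply, Pi.single_apply]
    rw [this]; split_ifs <;> simp
  have : ∑ q ∈ F, ss t q = RR slitH t (∑ q ∈ F, dl q) (0,0) := by
    unfold ss RR
    rw [← Summable.tsum_finsetSum (fun q _ => RR_summable slitH h0 h1 (dl_abs q) (0,0))]
    congr 1
    funext n
    rw [map_sum, Finset.sum_apply, Finset.mul_sum]
  rw [this]
  exact (le_abs_self _).trans (RR_abs slitH h0 h1 hb _)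

theorem row_inj (j : ℤ) : Function.Injective (fun i : ℤ => (i, j)) := fun _ _ h => (Prod.mk.inj h).1

theorem row_summable {t : ℝ} (h0 : 0 ≤ t) (h1 : t < 1/4) (j : ℤ) : Summable (fun i : ℤ => ss t (i, j)) :=
  (ss_summable h0 h1).comp_injective (row_inj j)

noncomputable def SS (t : ℝ) (x : ℂ) (j : ℤ) : ℂ := ∑' i : ℤ, (ss t (i,j) : ℂ) * x ^ i

theorem SS_norm {t : ℝ} (h0 : 0 ≤ t) {x : ℂ} (hx : ‖x‖ = 1) (i j : ℤ) :
    ‖(ss t (i,j) : ℂ) * x ^ i‖ = ss t (i,j) := by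
  rw [norm_mul, norm_zpow, hx, one_zpow, mul_one, Complex.norm_real, Real.norm_of_nonneg (ss_nonneg h0 _)]

theorem SS_hasSum {t : ℝ} (h0 : 0 ≤ t) (h1 : t < 1/4) {x : ℂ} (hx : ‖x‖ = 1) (j : ℤ) :
    HasSum (fun i : ℤ => (ss t (i,j) : ℂ) * x ^ i) (SS t x j) := by
  apply Summable.hasSum
  apply Summable.of_norm
  simp only [SS_norm h0 hx]
  exact row_summable h0 h1 j

theorem SS_bound {t : ℝ} (h0 : 0 ≤ t) (h1 : t < 1/4) {x : ℂ} (hx : ‖x‖ = 1) (j : ℤ) :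
    ‖SS t x j‖ ≤ ∑' q, ss t q := by
  have h := norm_tsum_le_tsum_norm (f := fun i : ℤ => (ss t (i,j) : ℂ) * x ^ i) (by
    simp only [SS_norm h0 hx]
    exact row_summable h0 h1 j)
  simp only [SS_norm h0 hx] at h
  refine h.trans ?_
  exact tsum_comp_le_tsum_of_inj (ss_summable h0 h1) (ss_nonneg h0) (row_inj j)

theorem hh_hasSum {t : ℝ} (h0 : 0 ≤ t) (h1 : t < 1/4) {x : ℂ} (hx : ‖x‖ = 1) (j : ℤ) :
    HasSum (fun i : ℤ => (hh t (i,j) : ℂ) * x ^ i)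
      (t * ((x + x⁻¹) * SS t x j + SS t x (j+1) + SS t x (j-1))) := by
  have hx0 : x ≠ 0 := by rintro rfl; simp at hx
  have s := SS_hasSum h0 h1 hx
  have e1 : HasSum (fun i : ℤ => (ss t (i+1,j) : ℂ) * x ^ i) (x⁻¹ * SS t x j) := by
    have := ((Equiv.addRight (1:ℤ)).hasSum_iff.mpr (s j)).mul_left x⁻¹
    refine this.congr_fun fun i => ?_
    simp only [Function.comp_def, Equiv.coe_addRight]
    rw [zpow_add₀ hx0]
    field_simp
  have e2 : HasSum (fun i : ℤ => (ss t (i-1,j) : ℂ) * x ^ i) (x * SS t x j) := by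
    have := ((Equiv.addRight (-1:ℤ)).hasSum_iff.mpr (s j)).mul_left x
    refine this.congr_fun fun i => ?_
    simp only [Function.comp_def, Equiv.coe_addRight, ← sub_eq_add_neg]
    rw [zpow_sub₀ hx0]
    field_simp
  have := (((e1.add e2).add (s (j+1))).add (s (j-1))).mul_left (t:ℂ)
  rw [show (t:ℂ) * ((x + x⁻¹) * SS t x j + SS t x (j+1) + SS t x (j-1)) =
    t * (x⁻¹ * SS t x j + x * SS t x j + SS t x (j + 1) + SS t x (j - 1)) by ring]
  refine this.congr_fun fun i => ?_
  · simp only [hh, Prod.mk_add_mk, add_zero, ← sub_eq_add_neg]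
    push_cast; ring

theorem rec_decay (S : ℕ → ℂ) (κ Y K : ℝ) (hS : ∀ n, ‖S n‖ ≤ K) (hY0 : 0 < Y) (hY1 : Y < 1)
    (hY : Y ^ 2 - κ * Y + 1 = 0) (h : ∀ n, S (n+2) + S n = κ * S (n+1)) : S 1 = Y * S 0 := by
  have hYc : (Y:ℂ) ^ 2 - κ * Y + 1 = 0 := by exact_mod_cast hY
  have hD : ∀ n, S (n+1) - Y * S n = Y * (S (n+2) - Y * S (n+1)) := by
    intro n
    linear_combination (S (n+1)) * hYc - (Y:ℂ) * h n
  have hD' : ∀ n, S 1 - Y * S 0 = Y ^ n * (S (n+1) - Y * S n) := by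
    intro n
    induction n with
    | zero => simp
    | succ n ih => rw [ih, hD n]; ring
  have hb : ∀ n, ‖S 1 - Y * S 0‖ ≤ Y ^ n * (K + K) := by
    intro n
    rw [hD' n, norm_mul, norm_pow, Complex.norm_real, Real.norm_of_nonneg hY0.le]
    apply mul_le_mul_of_nonneg_left _ (by positivity)
    refine (norm_sub_le _ _).trans (add_le_add (hS _) ?_)
    rw [norm_mul, Complex.norm_real, Real.norm_of_nonneg hY0.le]
    have := norm_nonneg (S n)
    have := hS n
    nlinarith
  have hl : Tendsto (fun n : ℕ => Y ^ n * (K + K)) atTop (nhds 0) := by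
    have := (tendsto_pow_atTop_nhds_zero_of_lt_one hY0.le hY1).mul_const (K + K)
    simpa using this
  have : ‖S 1 - Y * S 0‖ ≤ 0 := ge_of_tendsto' hl hb
  exact sub_eq_zero.mp (norm_le_zero_iff.mp this)

noncomputable def MM (t : ℝ) (n : ℕ) : ℝ := (if n = 0 then 1 else 0) - hh t (-(n:ℤ), 0)

theorem hh_row_summable {t : ℝ} (h0 : 0 ≤ t) (h1 : t < 1/4) : Summable (fun q => hh t q) := by
  unfold hh
  have s := ss_summable h0 h1
  have e : ∀ a : ℤ × ℤ, Summable (fun q => ss t (q + a)) := fun a => s.comp_injective (add_left_injective a)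
  exact ((((e _).add (e _)).add (e _)).add (e _)).mul_left t

theorem MM_summable {t : ℝ} (h0 : 0 ≤ t) (h1 : t < 1/4) : Summable (fun n => ‖(MM t n : ℂ)‖) := by
  have e1 : Summable (fun n : ℕ => hh t (-(n:ℤ), 0)) :=
    (hh_row_summable h0 h1).comp_injective (i := fun n : ℕ => (-(n:ℤ), (0:ℤ))) (by
      intro a b h; simpa using h)
  have e2 : Summable (fun n : ℕ => (if n = 0 then 1 else 0 : ℝ)) :=
    summable_of_ne_finset_zero (s := {0}) (fun n hn => by simpa using hn)
  have := (e2.sub e1).norm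
  simp only [MM, Complex.norm_real]
  exact this

theorem row_sq {t : ℝ} (h0 : 0 < t) (h1 : t < 1/4) {x : ℂ} (hx : ‖x‖ = 1) :
    SS t x 0 ^ 2 * ((1 - t * (x + x⁻¹)) ^ 2 - 4 * t ^ 2) = (∑' n, (MM t n : ℂ) * x⁻¹ ^ n) ^ 2 := by
  have hx0 : x ≠ 0 := by rintro rfl; simp at hx
  have hinv : x⁻¹ = (starRingEnd ℂ) x := by
    rw [Complex.inv_def, Complex.normSq_eq_norm_sq, hx]; simp
  have hre : x + x⁻¹ = ((2 * x.re : ℝ) : ℂ) := by rw [hinv, Complex.add_conj]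
  have hre1 : x.re ≤ 1 := by
    have := Complex.re_le_norm x; rwa [hx] at this
  obtain ⟨κ, hκ⟩ : ∃ κ : ℝ, t * κ = 1 - t * (2 * x.re) := ⟨(1 - t * (2 * x.re)) / t, by field_simp⟩
  have hκ2 : 2 < κ := by nlinarith
  have hκc : (t:ℂ) * κ = 1 - t * (x + x⁻¹) := by rw [hre]; exact_mod_cast hκ
  have ht0 : (t:ℂ) ≠ 0 := by exact_mod_cast h0.ne'
  obtain ⟨Y, hY0, hY1, hY⟩ : ∃ Y : ℝ, 0 < Y ∧ Y < 1 ∧ Y ^ 2 - κ * Y + 1 = 0 := by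
    have hsq : Real.sqrt (κ ^ 2 - 4) ^ 2 = κ ^ 2 - 4 := Real.sq_sqrt (by nlinarith)
    have hnn := Real.sqrt_nonneg (κ ^ 2 - 4)
    refine ⟨(κ - Real.sqrt (κ ^ 2 - 4)) / 2, ?_, ?_, ?_⟩
    · nlinarith
    · nlinarith
    · linear_combination (1/4) * hsq
  have hrow : ∀ j : ℤ, j ≠ 0 → SS t x (j+1) + SS t x (j-1) = κ * SS t x j := by
    intro j hj
    have a := hh_hasSum h0.le h1 hx j
    have b := SS_hasSum h0.le h1 hx j
    have : (fun i : ℤ => (ss t (i,j) : ℂ) * x ^ i) = (fun i : ℤ => (hh t (i,j) : ℂ) * x ^ i) := by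
      funext i
      rw [ss_notMem h0.le h1 _ (by simp [slitH_iff, hj])]
    rw [this] at b
    have c := a.unique b
    apply mul_left_cancel₀ ht0
    linear_combination c - SS t x j * hκc
  have hp : SS t x 1 = Y * SS t x 0 := by
    have hq := rec_decay (fun n => SS t x (n)) κ Y _ (fun n => SS_bound h0.le h1 hx _) hY0 hY1 hY ?_
    · simpa using hq
    intro n
    have := hrow (n+1) (by omega)
    push_cast
    rw [← this]; congr 2 <;> ring
  have hm : SS t x (-1) = Y * SS t x 0 := by
    have hq := rec_decay (fun n => SS t x (-n)) κ Y _ (fun n => SS_bound h0.le h1 hx _) hY0 hY1 hY ?_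
    · simpa using hq
    intro n
    have := hrow (-(n+1)) (by omega)
    push_cast
    rw [← this, add_comm]; congr 2 <;> ring
  have hr0 := hh_hasSum h0.le h1 hx 0
  rw [zero_add, zero_sub, hp, hm] at hr0
  have hs0 := SS_hasSum h0.le h1 hx 0
  have hd := hs0.sub hr0
  have hm2 : HasSum (fun n : ℕ => (MM t n : ℂ) * x⁻¹ ^ n)
      (SS t x 0 - (t * ((x + x⁻¹) * SS t x 0 + Y * SS t x 0 + Y * SS t x 0))) := by
    rw [nat_to_int _ (fun i : ℤ => (ss t (-i,0) : ℂ) * x ^ (-i) - (hh t (-i,0) : ℂ) * x ^ (-i))]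
    · exact (Equiv.neg ℤ).hasSum_iff.mpr hd
    · intro n
      rw [ss_mem, MM]
      push_cast
      rw [zpow_neg, zpow_natCast, inv_pow]
      ring
    · intro i hi
      rw [ss_notMem h0.le h1 _ (by simp [slitH_iff]; omega)]
      ring
  rw [hm2.tsum_eq]
  have hYc : (Y:ℂ) ^ 2 - κ * Y + 1 = 0 := by exact_mod_cast hY
  have e1 : (SS t x 0 - (t * ((x + x⁻¹) * SS t x 0 + Y * SS t x 0 + Y * SS t x 0))) = SS t x 0 * (t * (κ - 2 * Y)) := by
    linear_combination (-SS t x 0) * hκc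
  rw [e1, ← hκc]
  linear_combination (-4 * SS t x 0 ^ 2 * t ^ 2) * hYc

theorem factor {t : ℝ} (h0 : 0 < t) (h1 : t < 1/4) {u v cu cv : ℝ} (hu : |u| < 1) (hv : |v| < 1)
    (e1 : cu * (1 + u ^ 2) = 1 - 2 * t) (e2 : cu * u = t) (e3 : cv * (1 + v ^ 2) = 1 + 2 * t) (e4 : cv * v = t) :
    cu * cv = (1 - FF t 0) ^ 2 ∧ PowerSeries.mk (AA t) ^ 2 *
      ((1 - PowerSeries.C u * PowerSeries.X) * (1 - PowerSeries.C v * PowerSeries.X)) = 1 := by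
  have hcu : cu ≠ 0 := by rintro rfl; simp at e2; linarith
  have hcv : cv ≠ 0 := by rintro rfl; simp at e4; linarith
  have f1 : (cu:ℂ) * (1 + u ^ 2) = 1 - 2 * t := by exact_mod_cast e1
  have f2 : (cu:ℂ) * u = t := by exact_mod_cast e2
  have f3 : (cv:ℂ) * (1 + v ^ 2) = 1 + 2 * t := by exact_mod_cast e3
  have f4 : (cv:ℂ) * v = t := by exact_mod_cast e4
  have hAs : Summable fun n : ℕ => ‖(AA t n : ℂ)‖ := by
    have := (row_summable h0.le h1 0).comp_injective (Nat.cast_injective (R := ℤ))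
    simp only [Complex.norm_real]
    exact this.norm
  have key := wh (fun n => (AA t n : ℂ)) (fun n => (MM t n : ℂ)) hAs (MM_summable h0.le h1) ((cu * cv : ℝ):ℂ) u v
    (by simpa [Complex.norm_real] using hu) (by simpa [Complex.norm_real] using hv)
    (fun x => SS t x 0) (fun x => ∑' n, (MM t n : ℂ) * x ^ n)
    (by
      intro x hx
      rw [nat_to_int _ (fun i : ℤ => (ss t (i,0) : ℂ) * x ^ i)]
      · exact SS_hasSum h0.le h1 hx 0
      · intro n; simp [ss, AA]
      · intro i hi
        obtain ⟨n, rfl⟩ : ∃ n : ℕ, i = -(n:ℤ) := ⟨(-i).toNat, by omega⟩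
        rw [ss_mem, if_neg (by omega)]; simp)
    (by
      intro x hx
      apply Summable.hasSum
      apply Summable.of_norm
      simpa [hx] using MM_summable h0.le h1)
    (by
      intro x hx
      have hx0 : x ≠ 0 := by rintro rfl; simp at hx
      have hxi : x * x⁻¹ = 1 := mul_inv_cancel₀ hx0
      rw [← row_sq h0 h1 hx]
      congr 1
      have g1 : (cu:ℂ) * (1 - u * x) * (1 - u * x⁻¹) = 1 - 2 * t - t * (x + x⁻¹) := by
        linear_combination f1 + (cu:ℂ) * u ^ 2 * hxi - (x + x⁻¹) * f2
      have g2 : (cv:ℂ) * (1 - v * x) * (1 - v * x⁻¹) = 1 + 2 * t - t * (x + x⁻¹) := by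
        linear_combination f3 + (cv:ℂ) * v ^ 2 * hxi - (x + x⁻¹) * f4
      push_cast
      calc _ = ((cu:ℂ) * (1 - u * x) * (1 - u * x⁻¹)) * ((cv:ℂ) * (1 - v * x) * (1 - v * x⁻¹)) := by ring
        _ = _ := by rw [g1, g2]; ring)
    (by simp [AA_zero])
    (by exact_mod_cast mul_ne_zero hcu hcv)
  obtain ⟨k1, k2⟩ := key
  constructor
  · have : cu * cv = MM t 0 ^ 2 := by exact_mod_cast k1
    rw [this, MM]
    congr 2
    rw [FF]
    have := hh_eq h0.le h1 (0,0)
    simpa using this.symm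
  · apply PowerSeries.map_injective (Complex.ofRealHom) Complex.ofReal_injective
    have hm : PowerSeries.map Complex.ofRealHom (PowerSeries.mk (AA t)) = PowerSeries.mk (fun n => (AA t n : ℂ)) := by
      ext n; simp
    simp only [map_mul, map_pow, map_sub, map_one, PowerSeries.map_C, PowerSeries.map_X, hm]
    exact k2

end SlitPf
namespace SlitPf

/-- coefficients of `((1-uX)(1-vX))^(-1/2)` -/
noncomputable def QQ (u v : ℝ) : ℕ → ℝ
  | 0 => 1
  | 1 => (u + v) / 2
  | (n+2) => (((n:ℝ) + 3/2) * (u + v) * QQ u v (n+1) - ((n:ℝ) + 1) * (u * v) * QQ u v n) / ((n:ℝ) + 2)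

open PowerSeries in
theorem QQ_of {u v : ℝ} {a : ℕ → ℝ} (ha : a 0 = 1)
    (h : PowerSeries.mk a ^ 2 * ((1 - C u * X) * (1 - C v * X)) = 1) (n : ℕ) : a n = QQ u v n := by
  set P : PowerSeries ℝ := PowerSeries.mk a with hP
  have hP0 : P ≠ 0 := by rintro h0; rw [h0] at h; simp at h
  have hd := congrArg (d⁄dX ℝ) h
  simp only [Derivation.leibniz, Derivation.leibniz_pow, map_sub, derivative_one, derivative_C, derivative_X, smul_eq_mul] at hd
  have hE : P * (C 2 * d⁄dX ℝ P - C (2 * (u + v)) * (X * d⁄dX ℝ P) + C (2 * (u * v)) * (X * (X * d⁄dX ℝ P))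
      - C (u + v) * P + C (2 * (u * v)) * (X * P)) = 0 := by
    rw [← hd]
    simp only [map_mul, map_add, show (C (2:ℝ) : PowerSeries ℝ) = 2 from map_ofNat _ 2]
    simp
    ring
  have hE2 := (mul_eq_zero.mp hE).resolve_left hP0
  have hc : ∀ n, coeff n (X * d⁄dX ℝ P) = n * a n := by
    intro n
    cases n with
    | zero => simp
    | succ n => rw [coeff_succ_X_mul, coeff_derivative, hP, coeff_mk]; push_cast; ring
  have h0 := congrArg (coeff 0) hE2
  have h1 : ∀ n, _ := fun n => congrArg (coeff (n+1)) hE2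
  simp only [map_add (coeff _), map_sub (coeff _), coeff_C_mul, coeff_derivative, hc, coeff_zero_X_mul, map_zero] at h0
  simp only [map_add (coeff _), map_sub (coeff _), coeff_C_mul, coeff_derivative, hc, coeff_succ_X_mul, map_zero] at h1
  simp only [hP, coeff_mk, ha] at h0 h1
  have g1 : a 1 = (u + v) / 2 := by norm_num at h0; linarith
  have g2 : ∀ n, a (n+2) = (((n:ℝ) + 3/2) * (u + v) * a (n+1) - ((n:ℝ) + 1) * (u * v) * a n) / ((n:ℝ) + 2) := by
    intro n
    have hn : ((n:ℝ) + 2) ≠ 0 := by positivity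
    rw [eq_div_iff hn]
    have := h1 n
    push_cast at this
    linarith
  induction n using Nat.strong_induction_on with
  | _ n ih =>
    match n with
    | 0 => simpa [QQ] using ha
    | 1 => simpa [QQ] using g1
    | (n+2) => rw [g2, QQ, ih (n+1) (by omega), ih n (by omega)]

theorem sum_sq {u v : ℝ} {a : ℕ → ℝ} {s : ℝ} (hs : HasSum a s)
    (h : PowerSeries.mk a ^ 2 * ((1 - PowerSeries.C u * PowerSeries.X) * (1 - PowerSeries.C v * PowerSeries.X)) = 1) :
    s ^ 2 * ((1 - u) * (1 - v)) = 1 := by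
  have h2 := congrArg (PowerSeries.map Complex.ofRealHom) h
  have hm : PowerSeries.map Complex.ofRealHom (PowerSeries.mk a) = PowerSeries.mk (fun n => (a n : ℂ)) := by
    ext n; simp
  simp only [map_mul, map_pow, map_sub, map_one, PowerSeries.map_C, PowerSeries.map_X, hm] at h2
  have hsm : Summable fun n => ‖(a n : ℂ)‖ := by
    simp only [Complex.norm_real]; exact hs.summable.norm
  have pA : Plus (PowerSeries.mk fun n => (a n : ℂ)) (fun x => ∑' n, (a n : ℂ) * x ^ n) := by
    refine ⟨by simpa using hsm, fun x hx => ?_⟩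
    simp only [PowerSeries.coeff_mk]
    apply Summable.hasSum
    apply Summable.of_norm
    simpa [hx] using hsm
  have p1 := (pA.mul pA).mul ((Plus.lin u).mul (Plus.lin v))
  rw [← pow_two] at p1
  rw [show (Complex.ofRealHom u) = (u:ℂ) from rfl, show (Complex.ofRealHom v) = (v:ℂ) from rfl] at h2
  rw [h2] at p1
  have p2 := Plus.const 1
  rw [map_one] at p2
  have := (p1.hs 1 (by simp)).unique (p2.hs 1 (by simp))
  have e : (∑' n, (a n : ℂ) * 1 ^ n) = s := by
    simp only [one_pow, mul_one]
    rw [← hs.tsum_eq]; push_cast; rfl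
  simp only [e, mul_one] at this
  rw [pow_two]
  exact_mod_cast this

noncomputable def rho (r : ℝ) : ℝ := Real.sqrt (2 - r ^ 2)
noncomputable def uu (r : ℝ) : ℝ := (1 - r) / (1 + r)
noncomputable def vv (r : ℝ) : ℝ := (rho r - 1) / (rho r + 1)
noncomputable def lam (r : ℝ) : ℝ := 4 / ((1 + r) * (rho r + 1))

theorem param {r : ℝ} (h0 : 0 < r) (h1 : r < 1) :
    LL ((1 - r ^ 2) / 4) = lam r ∧ (∀ n, AA ((1 - r ^ 2) / 4) n = QQ (uu r) (vv r) n) ∧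
    BB ((1 - r ^ 2) / 4) 0 ^ 2 * (r ^ 3 * lam r) = 1 := by
  set t := (1 - r ^ 2) / 4 with ht
  have ht0 : 0 < t := by rw [ht]; nlinarith
  have ht1 : t < 1/4 := by rw [ht]; nlinarith
  have hρ2 : rho r ^ 2 = 2 - r ^ 2 := Real.sq_sqrt (by nlinarith)
  have hρn : 0 ≤ rho r := Real.sqrt_nonneg _
  have hρ1 : 1 < rho r := by nlinarith
  have hu : |uu r| < 1 := by
    rw [uu, abs_of_nonneg (div_nonneg (by linarith) (by linarith)), div_lt_one (by linarith)]; linarith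
  have hv : |vv r| < 1 := by
    rw [vv, abs_of_nonneg (div_nonneg (by linarith) (by linarith)), div_lt_one (by linarith)]; linarith
  obtain ⟨k1, k2⟩ := factor ht0 ht1 hu hv (cu := (1 + r) ^ 2 / 4) (cv := (rho r + 1) ^ 2 / 4)
    (by rw [uu, ht]; field_simp; ring)
    (by rw [uu, ht]; field_simp; ring)
    (by rw [vv, ht]; field_simp; linear_combination 2 * hρ2)
    (by rw [vv, ht]; field_simp; linear_combination hρ2)
  have hL := LL_eq ht0.le ht1
  have hLp := LL_pos ht0.le ht1
  have hB := BB_pos ht0.le ht1 0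
  have hLL : LL t = lam r := by
    have : (LL t * ((1 + r) * (rho r + 1) / 4)) ^ 2 = 1 := by
      calc _ = LL t ^ 2 * ((1 + r) ^ 2 / 4 * ((rho r + 1) ^ 2 / 4)) := by ring
        _ = (LL t * (1 - FF t 0)) ^ 2 := by rw [k1]; ring
        _ = 1 := by rw [hL]; norm_num
    have hp : 0 < LL t * ((1 + r) * (rho r + 1) / 4) := by positivity
    have : LL t * ((1 + r) * (rho r + 1) / 4) = 1 := by
      exact (pow_eq_one_iff_of_nonneg hp.le (by norm_num)).mp this
    rw [lam, eq_div_iff (by positivity)]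
    linarith
  refine ⟨hLL, QQ_of (AA_zero t) k2, ?_⟩
  have h3 := sum_sq (AA_hasSum ht0.le ht1) k2
  rw [← hLL]
  have h4 : (1 - uu r) * (1 - vv r) = r * LL t := by
    rw [hLL, uu, vv, lam]; field_simp; ring
  rw [h4, show 1 - 4 * t = r ^ 2 by rw [ht]; ring] at h3
  field_simp at h3
  linarith

theorem rho_zero : rho 0 = Real.sqrt 2 := by simp [rho]
theorem uu_zero : uu 0 = 1 := by simp [uu]
theorem sqrt2_sq : Real.sqrt 2 ^ 2 = 2 := Real.sq_sqrt (by norm_num)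
theorem sqrt2_gt : 1.4142 < Real.sqrt 2 := by
  rw [Real.lt_sqrt (by norm_num)]; norm_num
theorem sqrt2_lt : Real.sqrt 2 < 1.4143 := by
  rw [Real.sqrt_lt' (by norm_num)]; norm_num
theorem vv_zero : vv 0 = 3 - 2 * Real.sqrt 2 := by
  rw [vv, rho_zero, div_eq_iff (by positivity)]
  linear_combination 2 * sqrt2_sq
theorem lam_zero : lam 0 = 4 * (Real.sqrt 2 - 1) := by
  rw [lam, rho_zero, div_eq_iff (by positivity)]
  linear_combination (-4) * sqrt2_sq

theorem rho_diff : DifferentiableAt ℝ rho 0 := by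
  unfold rho
  apply DifferentiableAt.sqrt
  · fun_prop
  · norm_num
theorem uu_diff : DifferentiableAt ℝ uu 0 := by
  unfold uu
  apply DifferentiableAt.div
  · fun_prop
  · fun_prop
  · norm_num
theorem vv_diff : DifferentiableAt ℝ vv 0 := by
  unfold vv
  have := rho_diff
  apply DifferentiableAt.div
  · fun_prop
  · fun_prop
  · rw [rho_zero]; positivity
theorem lam_diff : DifferentiableAt ℝ lam 0 := by
  unfold lam
  have := rho_diff
  apply DifferentiableAt.div
  · fun_prop
  · fun_prop
  · rw [rho_zero]; positivity

theorem QQ_diff (n : ℕ) : DifferentiableAt ℝ (fun r => QQ (uu r) (vv r) n) 0 := by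
  have hu := uu_diff
  have hv := vv_diff
  induction n using Nat.strong_induction_on with
  | _ n ih =>
    match n with
    | 0 => simp [QQ]
    | 1 => simp only [QQ]; fun_prop
    | (n+2) =>
      have i1 := ih (n+1) (by omega)
      have i2 := ih n (by omega)
      simp only [QQ]
      fun_prop

/-- `√(1-z)` -/
noncomputable def rz (z : ℝ) : ℝ := Real.sqrt (1 - z)

theorem rz_prop {z : ℝ} (h0 : 0 < z) (h1 : z < 1) : 0 < rz z ∧ rz z < 1 ∧ rz z ^ 2 = 1 - z ∧ (1 - rz z ^ 2) / 4 = z / 4 := by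
  have h2 : rz z ^ 2 = 1 - z := Real.sq_sqrt (by linarith)
  have h3 : 0 < rz z := Real.sqrt_pos.mpr (by linarith)
  refine ⟨h3, by nlinarith, h2, by rw [h2]; ring⟩

theorem rz_tendsto : Tendsto rz (nhdsWithin 1 (Set.Iio 1)) (nhds 0) := by
  have : ContinuousAt rz 1 := by unfold rz; fun_prop
  have h := this.tendsto
  rw [show rz 1 = 0 by simp [rz]] at h
  exact h.mono_left nhdsWithin_le_nhds

theorem ev_z : ∀ᶠ z in nhdsWithin (1:ℝ) (Set.Iio 1), 0 < z ∧ z < 1 := by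
  have h1 : ∀ᶠ z in nhdsWithin (1:ℝ) (Set.Iio 1), z ∈ Set.Ioo (0:ℝ) 1 := Ioo_mem_nhdsLT (by norm_num)
  exact h1

/-- limit values -/
noncomputable def QL (n : ℕ) : ℝ := QQ 1 (3 - 2 * Real.sqrt 2) n

theorem AA_tendsto (n : ℕ) : Tendsto (fun z => AA (z/4) n) (nhdsWithin 1 (Set.Iio 1)) (nhds (QL n)) := by
  have h := ((QQ_diff n).continuousAt.tendsto).comp rz_tendsto
  rw [uu_zero, vv_zero] at h
  refine h.congr' ?_
  filter_upwards [ev_z] with z hz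
  obtain ⟨a, b, c, d⟩ := rz_prop hz.1 hz.2
  have := (param a b).2.1 n
  rw [d] at this
  rw [this]; rfl

theorem LL_tendsto : Tendsto (fun z => LL (z/4)) (nhdsWithin 1 (Set.Iio 1)) (nhds (4 * (Real.sqrt 2 - 1))) := by
  have h := (lam_diff.continuousAt.tendsto).comp rz_tendsto
  rw [lam_zero] at h
  refine h.congr' ?_
  filter_upwards [ev_z] with z hz
  obtain ⟨a, b, c, d⟩ := rz_prop hz.1 hz.2
  have := (param a b).1
  rw [d] at this
  rw [this]; rfl

theorem AA_bigO (n : ℕ) : (fun z => QL n - AA (z/4) n) =O[nhdsWithin 1 (Set.Iio 1)] rz := by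
  have h := (QQ_diff n).isBigO_sub
  have h2 := h.comp_tendsto rz_tendsto
  simp only [sub_zero, uu_zero, vv_zero] at h2
  refine Asymptotics.IsBigO.congr' h2.neg_left ?_ (by rfl)
  filter_upwards [ev_z] with z hz
  obtain ⟨a, b, c, d⟩ := rz_prop hz.1 hz.2
  have := (param a b).2.1 n
  rw [d] at this
  rw [this]; simp [QL]

theorem BB_rpow {z : ℝ} (h0 : 0 < z) (h1 : z < 1) :
    (1 - z) ^ (3/4 : ℝ) * BB (z/4) 0 = (Real.sqrt (LL (z/4)))⁻¹ := by
  obtain ⟨a, b, c, d⟩ := rz_prop h0 h1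
  obtain ⟨p1, p2, p3⟩ := param a b
  rw [d] at p1 p3
  rw [← p1] at p3
  have hL := LL_pos (t := z/4) (by linarith) (by linarith)
  have hB := BB_pos (t := z/4) (by linarith) (by linarith) 0
  have e : (1 - z) ^ (3/4 : ℝ) = Real.sqrt (rz z ^ 3) := by
    rw [rz, Real.sqrt_eq_rpow, Real.sqrt_eq_rpow, ← Real.rpow_natCast, ← Real.rpow_mul (by linarith : 0 ≤ 1 - z), ← Real.rpow_mul (by linarith : 0 ≤ 1 - z)]
    norm_num
  refine eq_inv_of_mul_eq_one_left ?_
  rw [e]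
  have : Real.sqrt (BB (z/4) 0 ^ 2 * (rz z ^ 3 * LL (z/4))) = 1 := by rw [p3, Real.sqrt_one]
  rw [Real.sqrt_mul (by positivity), Real.sqrt_sq hB.le, Real.sqrt_mul (by positivity)] at this
  linarith

end SlitPf
namespace SlitPf

noncomputable def gam (k m : ℕ) : ℝ := (TT slitH ^ m) (dl ((k:ℤ),0)) (0,0) / 4 ^ m

theorem gam_nonneg (k m : ℕ) : 0 ≤ gam k m :=
  div_nonneg (TT_pow_nonneg _ (dl_nonneg _) _ _) (by positivity)

theorem AA_gam (k : ℕ) (z : ℝ) : AA (z/4) k = ∑' m, gam k m * z ^ m := by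
  unfold AA RR gam
  congr 1
  funext m
  rw [div_pow]; ring

theorem AA_gam_hasSum (k : ℕ) {z : ℝ} (h0 : 0 ≤ z) (h1 : z < 1) : HasSum (fun m => gam k m * z ^ m) (AA (z/4) k) := by
  rw [AA_gam]
  apply Summable.hasSum
  refine (RR_summable slitH (t := z/4) (by linarith) (by linarith) (dl_abs ((k:ℤ),0)) (0,0)).congr fun m => ?_
  rw [gam, div_pow]; ring

theorem gam_summable (k : ℕ) : Summable (gam k) := by
  refine summable_of_sum_range_le (c := QL k) (gam_nonneg k) fun n => ?_
  have h : Tendsto (fun z : ℝ => ∑ m ∈ Finset.range n, gam k m * z ^ m) (nhdsWithin 1 (Set.Iio 1))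
      (nhds (∑ m ∈ Finset.range n, gam k m)) := by
    have : ContinuousAt (fun z : ℝ => ∑ m ∈ Finset.range n, gam k m * z ^ m) 1 := by fun_prop
    have := this.tendsto.mono_left (nhdsWithin_le_nhds (s := Set.Iio 1))
    simpa using this
  refine le_of_tendsto_of_tendsto h (AA_tendsto k) ?_
  filter_upwards [ev_z] with z hz
  have hs := AA_gam_hasSum k hz.1.le hz.2
  rw [← hs.tsum_eq]
  exact hs.summable.sum_le_tsum _ (fun m _ => mul_nonneg (gam_nonneg k m) (pow_nonneg hz.1.le m))

theorem gam_tsum (k : ℕ) : HasSum (gam k) (QL k) := by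
  have h := (gam_summable k).hasSum
  have h2 := Real.tendsto_tsum_powerSeries_nhdsWithin_lt h.tendsto_sum_nat
  simp only [← AA_gam] at h2
  rwa [tendsto_nhds_unique h2 (AA_tendsto k)] at h

theorem count_gam (k m : ℕ) : (slitCount sqSteps k 0 m : ℝ) / 4 ^ m = gam k m := by
  rw [count_eq, gam]

theorem sSum_eq (k : ℕ) : sSum k = QL k := by
  unfold sSum
  simp only [count_gam]
  exact (gam_tsum k).tsum_eq

theorem QL_nonneg (k : ℕ) : 0 ≤ QL k := (gam_tsum k).nonneg (gam_nonneg k)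

theorem QL_zero : QL 0 = 1 := rfl
theorem QL_one : QL 1 = 2 - Real.sqrt 2 := by simp only [QL, QQ]; ring
theorem QL_two : QL 2 = 5 * (3 - 2 * Real.sqrt 2) / 2 := by
  simp only [QL, QQ]; push_cast; linear_combination (3/2) * sqrt2_sq

theorem QL_step (n : ℕ) : QL (n+1) ≤ QL n := by
  induction n with
  | zero =>
    rw [QL_zero, zero_add, QL_one]
    linarith [sqrt2_gt]
  | succ n ih =>
    have h : ((n:ℝ)+2) * (QL (n+2) - QL (n+1)) = (n+1) * (3 - 2 * Real.sqrt 2) * (QL (n+1) - QL n)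
        + QL (n+1) * (1 - Real.sqrt 2) := by
      simp only [QL]
      rw [QQ]
      field_simp
      ring
    have hv : 0 ≤ 3 - 2 * Real.sqrt 2 := by linarith [sqrt2_lt]
    have h1 : (n+1) * (3 - 2 * Real.sqrt 2) * (QL (n+1) - QL n) ≤ 0 :=
      mul_nonpos_of_nonneg_of_nonpos (by positivity) (by linarith)
    have h2 : QL (n+1) * (1 - Real.sqrt 2) ≤ 0 :=
      mul_nonpos_of_nonneg_of_nonpos (QL_nonneg _) (by linarith [sqrt2_gt])
    have : QL (n+2) - QL (n+1) ≤ 0 := by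
      by_contra hc
      push Not at hc
      have : 0 < ((n:ℝ)+2) * (QL (n+2) - QL (n+1)) := by positivity
      linarith
    linarith

theorem QL_anti : Antitone QL := antitone_nat_of_succ_le QL_step

theorem sumsq_pos (k : ℕ) (hk : 1 ≤ k) : 0 < ∑ l ∈ Finset.range k, QL l ^ 2 := by
  have : QL 0 ^ 2 ≤ ∑ l ∈ Finset.range k, QL l ^ 2 :=
    Finset.single_le_sum (f := fun l => QL l ^ 2) (fun _ _ => sq_nonneg _) (Finset.mem_range.mpr hk)
  rw [QL_zero] at this
  linarith

theorem prob_lt (k : ℕ) (hk : 1 ≤ k) : QL k * (∑ l ∈ Finset.range k, QL l) / (∑ l ∈ Finset.range k, QL l ^ 2) < 1 := by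
  rw [div_lt_one (sumsq_pos k hk), Finset.mul_sum]
  apply Finset.sum_lt_sum
  · intro l hl
    rw [pow_two]
    exact mul_le_mul_of_nonneg_right (QL_anti (Finset.mem_range.mp hl).le) (QL_nonneg l)
  · refine ⟨0, Finset.mem_range.mpr hk, ?_⟩
    have := QL_anti hk
    rw [QL_one] at this
    rw [QL_zero]
    linarith [sqrt2_gt]

end SlitPf
namespace SlitPf

/-- coefficients of `(1-z)^(-3/4)` -/
noncomputable def dd : ℕ → ℝ
  | 0 => 1
  | (n+1) => dd n * ((n + 3/4) / (n + 1))

theorem dd_pos (n : ℕ) : 0 < dd n := by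
  induction n with
  | zero => simp [dd]
  | succ n ih => rw [dd]; positivity

theorem dd_succ (n : ℕ) : dd (n+1) = dd n - dd n / (4 * (n + 1)) := by
  rw [dd]; field_simp; ring

theorem dd_anti : Antitone dd := by
  apply antitone_nat_of_succ_le
  intro n
  rw [dd_succ]
  have := dd_pos n
  have : 0 ≤ dd n / (4 * (n + 1)) := by positivity
  linarith

theorem dd_slow (n : ℕ) (hn : 1 ≤ n) (j : ℕ) : dd n - j * (dd n / (4 * n)) ≤ dd (n + j) := by
  induction j with
  | zero => simp
  | succ j ih =>
    have hn' : (1:ℝ) ≤ n := by exact_mod_cast hn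
    have h := dd_succ (n + j)
    have h2 : dd (n + j) / (4 * ((n + j : ℕ) + 1)) ≤ dd n / (4 * n) := by
      apply div_le_div₀ (dd_pos n).le (dd_anti (by omega)) (by positivity)
      push_cast
      have : (0:ℝ) ≤ j := by positivity
      linarith
    rw [← add_assoc, h]
    push_cast at h2 ⊢
    linarith

theorem dd_four (n : ℕ) : 81/256 ≤ ((n:ℝ) + 1) * dd (n+1) ^ 4 := by
  induction n with
  | zero => simp [dd]; norm_num
  | succ n ih =>
    refine ih.trans ?_
    rw [dd.eq_2 (n+1)]
    have hp := dd_pos (n+1)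
    have hx : (0:ℝ) ≤ n := by positivity
    push_cast
    rw [mul_pow, div_pow]
    rw [show ((n:ℝ) + 1 + 1) * (dd (n+1) ^ 4 * (((n:ℝ) + 1 + 3/4) ^ 4 / ((n:ℝ) + 1 + 1) ^ 4)) =
      (((n:ℝ) + 1 + 3/4) ^ 4 / ((n:ℝ) + 1 + 1) ^ 3) * dd (n+1) ^ 4 by field_simp]
    apply mul_le_mul_of_nonneg_right _ (by positivity)
    rw [le_div_iff₀ (by positivity)]
    nlinarith [pow_nonneg hx 2, pow_nonneg hx 3, pow_nonneg hx 4]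

theorem dd_lower (n : ℕ) (hn : 1 ≤ n) : 3/4 * (1 / (n:ℝ)) ^ (1/4 : ℝ) ≤ dd n := by
  obtain ⟨m, rfl⟩ := Nat.exists_eq_add_of_le' hn
  have h := dd_four m
  have hy : ((1 / ((m+1 : ℕ):ℝ)) ^ (1/4 : ℝ)) ^ 4 = 1 / ((m+1 : ℕ):ℝ) := by
    rw [← Real.rpow_natCast, ← Real.rpow_mul (by positivity)]; norm_num
  have hp := dd_pos (m+1)
  rw [← pow_le_pow_iff_left₀ (by positivity) hp.le (by norm_num : 4 ≠ 0), mul_pow, hy]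
  push_cast
  rw [mul_one_div, div_le_iff₀ (by positivity)]
  linarith

theorem dd_eq_choose (n : ℕ) : dd n = Ring.choose ((3/4 : ℝ) + n - 1) n := by
  rw [← Ring.multichoose_eq]
  have h : ∀ n : ℕ, (n.factorial : ℝ) * dd n = (ascPochhammer ℝ n).eval (3/4 : ℝ) := by
    intro n
    induction n with
    | zero => simp [dd]
    | succ n ih =>
      rw [ascPochhammer_succ_eval, ← ih, dd, Nat.factorial_succ]
      push_cast
      field_simp
      ring
  have h2 := Ring.factorial_nsmul_multichoose_eq_ascPochhammer (3/4 : ℝ) n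
  rw [Polynomial.ascPochhammer_smeval_eq_eval, ← h n, nsmul_eq_mul] at h2
  exact (mul_left_cancel₀ (by exact_mod_cast Nat.factorial_ne_zero n) h2).symm

theorem dd_hasSum {z : ℝ} (h0 : 0 ≤ z) (h1 : z < 1) : HasSum (fun n => dd n * z ^ n) (1 / (1 - z) ^ (3/4 : ℝ)) := by
  have h := (Real.one_div_one_sub_rpow_hasFPowerSeriesOnBall_zero (3/4)).hasSum (y := z) (by
    rw [Metric.mem_eball, edist_zero_right, ← ofReal_norm, ENNReal.ofReal_lt_one]
    simpa [abs_of_nonneg h0] using h1)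
  rw [zero_add] at h
  refine h.congr_fun fun n => ?_
  rw [FormalMultilinearSeries.ofScalars_apply_eq, ← dd_eq_choose]
  simp

end SlitPf
namespace SlitPf

noncomputable def W (z : ℝ) : ℝ := (1 - z) ^ (3/4 : ℝ)

theorem W_nonneg {z : ℝ} (h : z < 1) : 0 ≤ W z := Real.rpow_nonneg (by linarith) _

theorem W_anti {y z : ℝ} (h : z < 1) (hy : y ≤ z) : W z ≤ W y :=
  Real.rpow_le_rpow (by linarith) (by linarith) (by norm_num)

theorem pow_mem {z : ℝ} (h0 : 0 < z) (h1 : z < 1) (n : ℕ) : z ^ n ∈ Set.Icc (0:ℝ) 1 :=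
  ⟨by positivity, pow_le_one₀ h0.le h1.le⟩

theorem phi_summable {δ η : ℕ → ℝ} (hδ : ∀ n, |δ n| ≤ η n) {g : ℝ → ℝ} (hg : ContinuousOn g (Set.Icc 0 1))
    {z : ℝ} (h0 : 0 < z) (h1 : z < 1) (hs : Summable fun n => η n * z ^ n) :
    Summable fun n => δ n * (z ^ n * g (z ^ n)) := by
  obtain ⟨M, hM⟩ := isCompact_Icc.exists_bound_of_continuousOn hg
  refine Summable.of_norm_bounded (hs.mul_right M) fun n => ?_
  have hz : 0 ≤ z ^ n := by positivity
  rw [norm_mul, norm_mul, Real.norm_eq_abs, Real.norm_eq_abs (z ^ n), abs_of_nonneg hz, mul_assoc]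
  exact mul_le_mul (hδ n) (mul_le_mul_of_nonneg_left (hM _ (pow_mem h0 h1 n)) hz) (by positivity)
    ((abs_nonneg _).trans (hδ n))

theorem pow_tendsto (k : ℕ) : Tendsto (fun z : ℝ => z ^ (k+1)) (nhdsWithin 1 (Set.Iio 1)) (nhdsWithin 1 (Set.Iio 1)) := by
  rw [tendsto_nhdsWithin_iff]
  constructor
  · have : ContinuousAt (fun z : ℝ => z ^ (k+1)) 1 := by fun_prop
    have := this.tendsto.mono_left (nhdsWithin_le_nhds (s := Set.Iio 1))
    simpa using this
  · filter_upwards [ev_z] with z hz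
    exact pow_lt_one₀ hz.1.le hz.2 (by omega)

theorem phi_mono {δ : ℕ → ℝ} (h : Tendsto (fun z => W z * ∑' n, δ n * z ^ n) (nhdsWithin 1 (Set.Iio 1)) (nhds 0))
    (k : ℕ) : Tendsto (fun z => W z * ∑' n, δ n * (z ^ n * (z ^ n) ^ k)) (nhdsWithin 1 (Set.Iio 1)) (nhds 0) := by
  have h2 := (h.comp (pow_tendsto k)).abs
  rw [abs_zero] at h2
  refine squeeze_zero_norm' ?_ h2
  filter_upwards [ev_z] with z hz
  have e : ∀ n, δ n * (z ^ n * (z ^ n) ^ k) = δ n * (z ^ (k+1)) ^ n := by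
    intro n
    rw [← pow_succ', ← pow_mul, ← pow_mul, mul_comm n]
  simp only [e, Function.comp_apply, Real.norm_eq_abs, abs_mul]
  apply mul_le_mul_of_nonneg_right _ (abs_nonneg _)
  have hz1 : z ^ (k+1) < 1 := pow_lt_one₀ hz.1.le hz.2 (by omega)
  rw [abs_of_nonneg (W_nonneg hz.2), abs_of_nonneg (W_nonneg hz1)]
  apply W_anti hz.2
  exact pow_le_of_le_one hz.1.le hz.2.le (by omega)

theorem phi_poly {δ η : ℕ → ℝ} (hδ : ∀ n, |δ n| ≤ η n) (hs : ∀ z : ℝ, 0 < z → z < 1 → Summable fun n => η n * z ^ n)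
    (h : Tendsto (fun z => W z * ∑' n, δ n * z ^ n) (nhdsWithin 1 (Set.Iio 1)) (nhds 0))
    (p : Polynomial ℝ) : Tendsto (fun z => W z * ∑' n, δ n * (z ^ n * p.eval (z ^ n))) (nhdsWithin 1 (Set.Iio 1)) (nhds 0) := by
  induction p using Polynomial.induction_on' with
  | add p q hp hq =>
    have := hp.add hq
    rw [add_zero] at this
    refine this.congr' ?_
    filter_upwards [ev_z] with z hz
    have s1 := phi_summable hδ p.continuous.continuousOn hz.1 hz.2 (hs z hz.1 hz.2)
    have s2 := phi_summable hδ q.continuous.continuousOn hz.1 hz.2 (hs z hz.1 hz.2)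
    rw [← mul_add, ← s1.tsum_add s2]
    congr 2
    funext n
    rw [Polynomial.eval_add]; ring
  | monomial k a =>
    have := (phi_mono h k).const_mul a
    rw [mul_zero] at this
    refine this.congr fun z => ?_
    rw [mul_left_comm, ← tsum_mul_left]
    congr 2
    funext n
    rw [Polynomial.eval_monomial]; ring

theorem phi_cont {δ η : ℕ → ℝ} (hδ : ∀ n, |δ n| ≤ η n) (hs : ∀ z : ℝ, 0 < z → z < 1 → Summable fun n => η n * z ^ n)
    (K : ℝ) (hK : ∀ᶠ z in nhdsWithin (1:ℝ) (Set.Iio 1), W z * ∑' n, η n * z ^ n ≤ K)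
    (h : Tendsto (fun z => W z * ∑' n, δ n * z ^ n) (nhdsWithin 1 (Set.Iio 1)) (nhds 0))
    {g : ℝ → ℝ} (hg : ContinuousOn g (Set.Icc 0 1)) :
    Tendsto (fun z => W z * ∑' n, δ n * (z ^ n * g (z ^ n))) (nhdsWithin 1 (Set.Iio 1)) (nhds 0) := by
  rw [Metric.tendsto_nhds]
  intro ε hε
  set ε' := ε / (2 * (|K| + 1)) with hε'
  have hε'p : 0 < ε' := by positivity
  obtain ⟨p, hp⟩ := exists_polynomial_near_of_continuousOn 0 1 g hg ε' hε'p
  have h1 := (Metric.tendsto_nhds.mp (phi_poly hδ hs h p)) (ε / 2) (by positivity)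
  filter_upwards [ev_z, hK, h1] with z hz hKz h1z
  have s1 := phi_summable hδ p.continuous.continuousOn hz.1 hz.2 (hs z hz.1 hz.2)
  have s2 := phi_summable hδ hg hz.1 hz.2 (hs z hz.1 hz.2)
  have hd : |(∑' n, δ n * (z ^ n * g (z ^ n))) - ∑' n, δ n * (z ^ n * p.eval (z ^ n))| ≤ (∑' n, η n * z ^ n) * ε' := by
    rw [← s2.tsum_sub s1, ← Real.norm_eq_abs]
    refine tsum_of_norm_bounded ((hs z hz.1 hz.2).hasSum.mul_right ε') fun n => ?_
    have hzn : 0 ≤ z ^ n := pow_nonneg hz.1.le n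
    rw [show δ n * (z ^ n * g (z ^ n)) - δ n * (z ^ n * p.eval (z ^ n)) = δ n * (z ^ n * (g (z ^ n) - p.eval (z ^ n))) by ring,
      norm_mul, norm_mul, Real.norm_eq_abs, Real.norm_eq_abs (z ^ n), abs_of_nonneg hzn, mul_assoc]
    refine mul_le_mul (hδ n) (mul_le_mul_of_nonneg_left ?_ hzn) (by positivity) ((abs_nonneg _).trans (hδ n))
    rw [Real.norm_eq_abs, abs_sub_comm]
    exact (hp _ (pow_mem hz.1 hz.2 n)).le
  rw [Real.dist_eq, sub_zero] at h1z ⊢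
  have hW := W_nonneg hz.2
  have e : W z * ∑' n, δ n * (z ^ n * g (z ^ n)) = W z * ∑' n, δ n * (z ^ n * p.eval (z ^ n)) +
    W z * ((∑' n, δ n * (z ^ n * g (z ^ n))) - ∑' n, δ n * (z ^ n * p.eval (z ^ n))) := by ring
  rw [e]
  refine (abs_add_le _ _).trans_lt ?_
  have h2 : |W z * ((∑' n, δ n * (z ^ n * g (z ^ n))) - ∑' n, δ n * (z ^ n * p.eval (z ^ n)))| ≤ ε / 2 := by
    rw [abs_mul, abs_of_nonneg hW]
    calc _ ≤ W z * ((∑' n, η n * z ^ n) * ε') := mul_le_mul_of_nonneg_left hd hW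
      _ = (W z * (∑' n, η n * z ^ n)) * ε' := by ring
      _ ≤ (|K| + 1) * ε' := mul_le_mul_of_nonneg_right (by linarith [le_abs_self K]) hε'p.le
      _ = ε / 2 := by rw [hε']; field_simp
  linarith

/-- bump -/
noncomputable def bump (p q x : ℝ) : ℝ := max 0 (min (x - Real.exp (-q)) (Real.exp (-p) - x))

theorem bump_cont (p q : ℝ) : Continuous (bump p q) := by unfold bump; fun_prop

theorem bump_nonneg (p q x : ℝ) : 0 ≤ bump p q x := le_max_left _ _

theorem bump_supp {p q x : ℝ} (h : bump p q (Real.exp (-x)) ≠ 0) : p < x ∧ x < q := by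
  by_contra hc
  apply h
  rw [bump, max_eq_left]
  rw [not_and_or] at hc
  rcases hc with hc | hc
  · refine (min_le_right _ _).trans ?_
    rw [sub_nonpos, Real.exp_le_exp]; linarith
  · refine (min_le_left _ _).trans ?_
    rw [sub_nonpos, Real.exp_le_exp]; linarith

/-- weights -/
noncomputable def wt (p q : ℝ) (N n : ℕ) : ℝ := Real.exp (-1 / N) ^ n * bump p q (Real.exp (-1 / N) ^ n)

theorem exp_pow_eq (N n : ℕ) : Real.exp (-1 / N) ^ n = Real.exp (-((n:ℝ) / N)) := by
  rw [← Real.exp_nat_mul]; congr 1; ring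

theorem wt_nonneg (p q : ℝ) (N n : ℕ) : 0 ≤ wt p q N n := mul_nonneg (by positivity) (bump_nonneg _ _ _)

theorem wt_supp {p q : ℝ} {N n : ℕ} (hN : 1 ≤ N) (h : wt p q N n ≠ 0) : p * N < n ∧ n < q * N := by
  have hN' : (0:ℝ) < N := by exact_mod_cast hN
  rw [wt, exp_pow_eq] at h
  have := bump_supp (right_ne_zero_of_mul h)
  rw [lt_div_iff₀ hN', div_lt_iff₀ hN'] at this
  exact this

theorem wt_lower {p q : ℝ} (hpq : p < q) : ∃ c : ℝ, 0 < c ∧ ∀ N n : ℕ, 1 ≤ N →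
    (2 * p + q) / 3 * N ≤ n → n ≤ (p + 2 * q) / 3 * N → c ≤ wt p q N n := by
  set p' := (2 * p + q) / 3 with hp'
  set q' := (p + 2 * q) / 3 with hq'
  have h1 : Real.exp (-q) < Real.exp (-q') := Real.exp_lt_exp.mpr (by rw [hq']; linarith)
  have h2 : Real.exp (-p') < Real.exp (-p) := Real.exp_lt_exp.mpr (by rw [hp']; linarith)
  have hm : 0 < min (Real.exp (-q') - Real.exp (-q)) (Real.exp (-p) - Real.exp (-p')) :=
    lt_min (by linarith) (by linarith)
  refine ⟨Real.exp (-q') * min (Real.exp (-q') - Real.exp (-q)) (Real.exp (-p) - Real.exp (-p')), by positivity, ?_⟩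
  intro N n hN ha hb
  have hN' : (0:ℝ) < N := by exact_mod_cast hN
  rw [← le_div_iff₀ hN'] at ha
  rw [← div_le_iff₀ hN'] at hb
  rw [wt, exp_pow_eq]
  have e1 : Real.exp (-q') ≤ Real.exp (-((n:ℝ)/N)) := Real.exp_le_exp.mpr (by linarith)
  have e2 : Real.exp (-((n:ℝ)/N)) ≤ Real.exp (-p') := Real.exp_le_exp.mpr (by linarith)
  refine mul_le_mul e1 ?_ hm.le (by positivity)
  refine le_trans ?_ (le_max_right _ _)
  exact min_le_min (by linarith) (by linarith)

theorem zN_tendsto : Tendsto (fun N : ℕ => Real.exp (-1 / N)) atTop (nhdsWithin 1 (Set.Iio 1)) := by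
  rw [tendsto_nhdsWithin_iff]
  constructor
  · have h : Tendsto (fun N : ℕ => (-1 : ℝ) / N) atTop (nhds 0) := tendsto_const_div_atTop_nhds_zero_nat (-1)
    have := (Real.continuous_exp.tendsto 0).comp h
    rwa [Real.exp_zero] at this
  · filter_upwards [eventually_ge_atTop 1] with N hN
    have hN' : (0:ℝ) < N := by exact_mod_cast hN
    rw [Set.mem_Iio, Real.exp_lt_one_iff]
    exact div_neg_of_neg_of_pos (by norm_num) hN'

theorem zN_lower (N : ℕ) (hN : 1 ≤ N) : 1 / (2 * N) ≤ 1 - Real.exp (-1 / N) := by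
  have hN' : (1:ℝ) ≤ N := by exact_mod_cast hN
  have h := Real.add_one_le_exp (1 / (N:ℝ))
  have e : Real.exp (-1 / N) = (Real.exp (1 / N))⁻¹ := by rw [← Real.exp_neg]; congr 1; ring
  have h2 : (Real.exp (1 / N))⁻¹ ≤ (1 / (N:ℝ) + 1)⁻¹ := inv_anti₀ (by positivity) h
  rw [e]
  have : (1 / (N:ℝ) + 1)⁻¹ = N / (N + 1) := by field_simp; ring
  rw [this] at h2
  have : 1 / (2 * (N:ℝ)) ≤ 1 - N / (N + 1) := by
    rw [show 1 - (N:ℝ) / (N + 1) = 1 / (N + 1) by field_simp; ring]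
    apply one_div_le_one_div_of_le <;> linarith
  linarith

end SlitPf
namespace SlitPf

theorem dd_summable {z : ℝ} (h0 : 0 < z) (h1 : z < 1) : Summable fun n => dd n * z ^ n :=
  (dd_hasSum h0.le h1).summable

theorem zN_mem {N : ℕ} (hN : 1 ≤ N) : 0 < Real.exp (-1 / N) ∧ Real.exp (-1 / N) < 1 := by
  have hN' : (0:ℝ) < N := by exact_mod_cast hN
  refine ⟨Real.exp_pos _, ?_⟩
  rw [Real.exp_lt_one_iff]
  exact div_neg_of_neg_of_pos (by norm_num) hN'

theorem wt_summable {δ η : ℕ → ℝ} (hδ : ∀ n, |δ n| ≤ η n)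
    (hs : ∀ z : ℝ, 0 < z → z < 1 → Summable fun n => η n * z ^ n) (p q : ℝ) {N : ℕ} (hN : 1 ≤ N) :
    Summable fun n => δ n * wt p q N n :=
  phi_summable hδ (bump_cont p q).continuousOn (zN_mem hN).1 (zN_mem hN).2
    (hs _ (zN_mem hN).1 (zN_mem hN).2)

theorem dd_abs (n : ℕ) : |dd n| ≤ dd n := (abs_of_pos (dd_pos n)).le

theorem W_dd_lower {M : ℝ} (hM : 2 ≤ M) {N n : ℕ} (hN : 1 ≤ N) (hn : 1 ≤ n) (hnM : (n:ℝ) ≤ M * N) :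
    3 / 4 * (1 / (M * N)) ≤ W (Real.exp (-1 / N)) * dd n := by
  have hN' : (0:ℝ) < N := by exact_mod_cast hN
  have hn' : (0:ℝ) < n := by exact_mod_cast hn
  have hp : 0 < 1 / (M * N) := by positivity
  have h1 : (1 / (M * N)) ^ (3/4:ℝ) ≤ W (Real.exp (-1 / N)) := by
    refine Real.rpow_le_rpow hp.le (le_trans ?_ (zN_lower N hN)) (by norm_num)
    exact one_div_le_one_div_of_le (by positivity) (mul_le_mul_of_nonneg_right hM hN'.le)
  have h2 : 3 / 4 * (1 / (M * N)) ^ (1/4:ℝ) ≤ dd n := by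
    refine le_trans ?_ (dd_lower n hn)
    refine mul_le_mul_of_nonneg_left ?_ (by norm_num)
    exact Real.rpow_le_rpow hp.le (one_div_le_one_div_of_le hn' hnM) (by norm_num)
  calc 3 / 4 * (1 / (M * N)) = (1 / (M * N)) ^ (3/4:ℝ) * (3 / 4 * (1 / (M * N)) ^ (1/4:ℝ)) := by
        have : (1 / (M * N)) ^ (3/4:ℝ) * (1 / (M * N)) ^ (1/4:ℝ) = 1 / (M * N) := by
          rw [← Real.rpow_add hp]; norm_num
        rw [mul_left_comm, this]
    _ ≤ _ := mul_le_mul h1 h2 (by positivity) (W_nonneg (zN_mem hN).2)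

theorem denom_lower {p q : ℝ} (hp : 0 < p) (hpq : p < q) :
    ∃ c : ℝ, 0 < c ∧ ∀ᶠ N : ℕ in atTop, c ≤ W (Real.exp (-1 / N)) * ∑' n, dd n * wt p q N n := by
  obtain ⟨c, hc, hw⟩ := wt_lower hpq
  set p' := (2 * p + q) / 3 with hp'
  set q' := (p + 2 * q) / 3 with hq'
  have hd : 0 < q' - p' := by rw [hp', hq']; linarith
  have hp'0 : 0 < p' := by rw [hp']; linarith
  set M := max 2 q with hM
  have hM2 : 2 ≤ M := le_max_left _ _
  have hq'M : q' ≤ M := le_trans (by rw [hq']; linarith) (le_max_right 2 q)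
  refine ⟨(q' - p') / 2 * (3 / 4 * (1 / M) * c), by positivity, ?_⟩
  obtain ⟨N0, hN0⟩ := exists_nat_ge (2 / (q' - p'))
  filter_upwards [eventually_ge_atTop 1, eventually_ge_atTop N0] with N hN hNN
  have hN' : (0:ℝ) < N := by exact_mod_cast hN
  have hbig : 2 ≤ (q' - p') * N := by
    have : 2 / (q' - p') ≤ N := hN0.trans (by exact_mod_cast hNN)
    rw [div_le_iff₀ hd] at this
    linarith
  set S := Finset.Icc ⌈p' * N⌉₊ ⌊q' * N⌋₊ with hS
  have hcard : (q' - p') / 2 * N ≤ (S.card : ℝ) := by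
    rw [hS, Nat.card_Icc]
    have h1 := Nat.lt_floor_add_one (q' * N)
    have h2 := Nat.ceil_lt_add_one (mul_pos hp'0 hN').le
    have h3 : ((⌊q' * N⌋₊ + 1 : ℕ) : ℝ) - (⌈p' * N⌉₊ : ℝ) ≤ ((⌊q' * N⌋₊ + 1 - ⌈p' * N⌉₊ : ℕ) : ℝ) := by
      rw [sub_le_iff_le_add]
      exact_mod_cast le_tsub_add
    push_cast at h3
    linarith
  have hWn := W_nonneg (zN_mem hN).2
  have hsum := wt_summable dd_abs (fun z h0 h1 => dd_summable h0 h1) p q hN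
  have hle : ∑ n ∈ S, dd n * wt p q N n ≤ ∑' n, dd n * wt p q N n :=
    hsum.sum_le_tsum _ fun n _ => mul_nonneg (dd_pos n).le (wt_nonneg _ _ _ _)
  calc (q' - p') / 2 * (3 / 4 * (1 / M) * c)
      = (q' - p') / 2 * N * (3 / 4 * (1 / (M * N)) * c) := by field_simp
    _ ≤ S.card * (3 / 4 * (1 / (M * N)) * c) := mul_le_mul_of_nonneg_right hcard (by positivity)
    _ = ∑ n ∈ S, (3 / 4 * (1 / (M * N)) * c) := by rw [Finset.sum_const, nsmul_eq_mul]
    _ ≤ ∑ n ∈ S, W (Real.exp (-1 / N)) * (dd n * wt p q N n) := by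
        refine Finset.sum_le_sum fun n hn => ?_
        rw [hS, Finset.mem_Icc] at hn
        have ha : p' * N ≤ n := Nat.ceil_le.mp hn.1
        have hb : (n:ℝ) ≤ q' * N := by
          have := Nat.floor_le (mul_nonneg (by linarith : 0 ≤ q') hN'.le)
          exact le_trans (by exact_mod_cast hn.2) this
        have hn1 : 1 ≤ n := by
          have : (0:ℝ) < n := lt_of_lt_of_le (by positivity) ha
          exact_mod_cast this
        rw [← mul_assoc]
        exact mul_le_mul (W_dd_lower hM2 hN hn1 (hb.trans (mul_le_mul_of_nonneg_right hq'M hN'.le)))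
          (hw N n hN ha hb) hc.le (mul_nonneg hWn (dd_pos n).le)
    _ = W (Real.exp (-1 / N)) * ∑ n ∈ S, dd n * wt p q N n := by rw [Finset.mul_sum]
    _ ≤ _ := mul_le_mul_of_nonneg_left hle hWn


theorem anti_summable {α : ℕ → ℝ} (ha : Antitone α) (h0 : ∀ n, 0 ≤ α n) {z : ℝ} (hz0 : 0 < z) (hz1 : z < 1) :
    Summable fun n => α n * z ^ n := by
  refine Summable.of_nonneg_of_le (fun n => mul_nonneg (h0 n) (by positivity))
    (fun n => mul_le_mul_of_nonneg_right (ha (Nat.zero_le n)) (by positivity))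
    ((summable_geometric_of_lt_one hz0.le hz1).mul_left (α 0))

theorem W_dd {z : ℝ} (hz0 : 0 < z) (hz1 : z < 1) : W z * ∑' n, dd n * z ^ n = 1 := by
  rw [(dd_hasSum hz0.le hz1).tsum_eq, W]
  exact mul_one_div_cancel (Real.rpow_pos_of_pos (by linarith) _).ne'

theorem ratio {α : ℕ → ℝ} (ha : Antitone α) (h0 : ∀ n, 0 ≤ α n) {C : ℝ}
    (h : Tendsto (fun z => W z * ∑' n, α n * z ^ n) (nhdsWithin 1 (Set.Iio 1)) (nhds C))
    {p q : ℝ} (hp : 0 < p) (hpq : p < q) :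
    Tendsto (fun N : ℕ => (∑' n, α n * wt p q N n) / (∑' n, dd n * wt p q N n)) atTop (nhds C) := by
  have hδ : ∀ n, |α n - C * dd n| ≤ α n + |C| * dd n := fun n => by
    refine (abs_sub _ _).trans ?_
    rw [abs_of_nonneg (h0 n), abs_mul, abs_of_pos (dd_pos n)]
  have hs : ∀ z : ℝ, 0 < z → z < 1 → Summable fun n => (α n + |C| * dd n) * z ^ n := by
    intro z hz0 hz1
    refine ((anti_summable ha h0 hz0 hz1).add ((dd_summable hz0 hz1).mul_left |C|)).congr fun n => ?_
    ring
  have hη : Tendsto (fun z => W z * ∑' n, (α n + |C| * dd n) * z ^ n) (nhdsWithin 1 (Set.Iio 1)) (nhds (C + |C|)) := by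
    refine (h.add_const |C|).congr' ?_
    filter_upwards [ev_z] with z hz
    have e : ∀ n, (α n + |C| * dd n) * z ^ n = α n * z ^ n + |C| * (dd n * z ^ n) := fun n => by ring
    simp only [e]
    rw [(anti_summable ha h0 hz.1 hz.2).tsum_add ((dd_summable hz.1 hz.2).mul_left |C|), tsum_mul_left,
      mul_add, mul_left_comm, W_dd hz.1 hz.2, mul_one]
  have hδ0 : Tendsto (fun z => W z * ∑' n, (α n - C * dd n) * z ^ n) (nhdsWithin 1 (Set.Iio 1)) (nhds 0) := by
    have := h.sub_const C
    rw [sub_self] at this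
    refine this.congr' ?_
    filter_upwards [ev_z] with z hz
    have e : ∀ n, (α n - C * dd n) * z ^ n = α n * z ^ n - C * (dd n * z ^ n) := fun n => by ring
    simp only [e]
    rw [(anti_summable ha h0 hz.1 hz.2).tsum_sub ((dd_summable hz.1 hz.2).mul_left C), tsum_mul_left,
      mul_sub, mul_left_comm, W_dd hz.1 hz.2, mul_one]
  have hK := hη.eventually_le_const (show C + |C| < C + |C| + 1 by linarith)
  have key := (phi_cont hδ hs _ hK hδ0 (bump_cont p q).continuousOn).comp zN_tendsto
  obtain ⟨c, hc, hlow⟩ := denom_lower hp hpq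
  rw [tendsto_iff_norm_sub_tendsto_zero]
  have key2 := (key.norm).div_const c
  rw [norm_zero, zero_div] at key2
  refine squeeze_zero' (Eventually.of_forall fun N => norm_nonneg _) ?_ key2
  filter_upwards [eventually_ge_atTop 1, hlow] with N hN hcN
  have sα : Summable fun n => α n * wt p q N n :=
    wt_summable (fun n => (abs_of_nonneg (h0 n)).le) (fun z => anti_summable ha h0) p q hN
  have sd := wt_summable dd_abs (fun z h0 h1 => dd_summable h0 h1) p q hN
  set D := ∑' n, dd n * wt p q N n with hD
  set A := ∑' n, α n * wt p q N n with hA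
  have hDA : A - C * D = ∑' n, (α n - C * dd n) * wt p q N n := by
    rw [hA, hD, ← tsum_mul_left, ← sα.tsum_sub (sd.mul_left C)]
    congr 1; funext n; ring
  have hWD : 0 < W (Real.exp (-1 / N)) * D := hc.trans_le hcN
  have hD0 : D ≠ 0 := by
    rintro h; rw [h, mul_zero] at hWD; exact lt_irrefl _ hWD
  have hW0 : W (Real.exp (-1 / N)) ≠ 0 := by
    rintro h; rw [h, zero_mul] at hWD; exact lt_irrefl _ hWD
  have e : A / D - C = (W (Real.exp (-1 / N)) * (A - C * D)) / (W (Real.exp (-1 / N)) * D) := by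
    rw [mul_div_mul_left _ _ hW0]
    field_simp
  rw [e, norm_div, hDA, Real.norm_of_nonneg hWD.le]
  exact div_le_div_of_nonneg_left (norm_nonneg _) hc hcN

theorem dd_wt_pos {p q : ℝ} (hp : 0 < p) (hpq : p < q) : ∀ᶠ N : ℕ in atTop, 0 < ∑' n, dd n * wt p q N n := by
  obtain ⟨c, hc, hlow⟩ := denom_lower hp hpq
  filter_upwards [eventually_ge_atTop 1, hlow] with N hN hcN
  by_contra hneg
  have := mul_nonpos_of_nonneg_of_nonpos (W_nonneg (zN_mem hN).2) (not_lt.mp hneg)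
  linarith

theorem taub_lower {α : ℕ → ℝ} (ha : Antitone α) (h0 : ∀ n, 0 ≤ α n) {ε : ℝ} (hε : 0 < ε) (hε1 : ε < 1/2) :
    ∀ᶠ N : ℕ in atTop, (1 - ε) * ((∑' n, α n * wt 1 (1+ε) N n) / (∑' n, dd n * wt 1 (1+ε) N n)) ≤ α N / dd N := by
  filter_upwards [eventually_ge_atTop 1, dd_wt_pos one_pos (show 1 < 1 + ε by linarith)] with N hN hD
  have hN' : (0:ℝ) < N := by exact_mod_cast hN
  have sα : Summable fun n => α n * wt 1 (1+ε) N n :=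
    wt_summable (fun n => (abs_of_nonneg (h0 n)).le) (fun z => anti_summable ha h0) _ _ hN
  have sd := wt_summable dd_abs (fun z h0 h1 => dd_summable h0 h1) 1 (1+ε) hN
  rw [← mul_div_assoc, div_le_div_iff₀ hD (dd_pos N), mul_right_comm, ← tsum_mul_left, ← tsum_mul_left]
  refine Summable.tsum_le_tsum (fun n => ?_) (sα.mul_left _) (sd.mul_left _)
  by_cases hw : wt 1 (1+ε) N n = 0
  · rw [hw]; simp
  obtain ⟨h1, h2⟩ := wt_supp hN hw
  rw [one_mul] at h1
  have h1' : N ≤ n := by exact_mod_cast h1.le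
  obtain ⟨j, rfl⟩ := Nat.exists_eq_add_of_le h1'
  push_cast at h2
  have hs := dd_slow N hN j
  have hdN := dd_pos N
  have hj : (j:ℝ) * (dd N / (4 * N)) ≤ ε * dd N := by
    have : (j:ℝ) ≤ ε * N := by linarith
    calc (j:ℝ) * (dd N / (4 * N)) ≤ (ε * N) * (dd N / (4 * N)) := mul_le_mul_of_nonneg_right this (by positivity)
      _ = ε / 4 * dd N := by field_simp
      _ ≤ ε * dd N := mul_le_mul_of_nonneg_right (by linarith) hdN.le
  rw [← mul_assoc, ← mul_assoc]
  refine mul_le_mul_of_nonneg_right ?_ (wt_nonneg _ _ _ _)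
  rw [mul_comm (α N)]
  exact mul_le_mul (by linarith) (ha h1') (h0 _) (dd_pos _).le

theorem taub_upper {α : ℕ → ℝ} (ha : Antitone α) (h0 : ∀ n, 0 ≤ α n) {ε : ℝ} (hε : 0 < ε) (hε1 : ε < 1/2) :
    ∀ᶠ N : ℕ in atTop, (1 - ε) * (α N / dd N) ≤ (∑' n, α n * wt (1-ε) 1 N n) / (∑' n, dd n * wt (1-ε) 1 N n) := by
  filter_upwards [eventually_ge_atTop 1, dd_wt_pos (show 0 < 1 - ε by linarith) (show 1 - ε < 1 by linarith)] with N hN hD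
  have hN' : (0:ℝ) < N := by exact_mod_cast hN
  have sα : Summable fun n => α n * wt (1-ε) 1 N n :=
    wt_summable (fun n => (abs_of_nonneg (h0 n)).le) (fun z => anti_summable ha h0) _ _ hN
  have sd := wt_summable dd_abs (fun z h0 h1 => dd_summable h0 h1) (1-ε) 1 hN
  rw [← mul_div_assoc, div_le_div_iff₀ (dd_pos N) hD, mul_comm _ (dd N), ← tsum_mul_left, ← tsum_mul_left]
  refine Summable.tsum_le_tsum (fun n => ?_) (sd.mul_left _) (sα.mul_left _)
  by_cases hw : wt (1-ε) 1 N n = 0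
  · rw [hw]; simp
  obtain ⟨h1, h2⟩ := wt_supp hN hw
  rw [one_mul] at h2
  have h2' : n ≤ N := by exact_mod_cast h2.le
  have hn0 : (0:ℝ) < n := lt_trans (mul_pos (by linarith) hN') h1
  have hn : 1 ≤ n := by exact_mod_cast hn0
  obtain ⟨j, rfl⟩ := Nat.exists_eq_add_of_le h2'
  have hs := dd_slow n hn j
  have hdn := dd_pos n
  push_cast at h1 hN'
  have hj : (j:ℝ) * (dd n / (4 * n)) ≤ ε * dd n := by
    have : (j:ℝ) ≤ ε * (4 * n) := by nlinarith [mul_pos hε hn0]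
    calc (j:ℝ) * (dd n / (4 * n)) ≤ (ε * (4 * n)) * (dd n / (4 * n)) := mul_le_mul_of_nonneg_right this (by positivity)
      _ = ε * dd n := by field_simp
  rw [← mul_assoc, ← mul_assoc]
  refine mul_le_mul_of_nonneg_right ?_ (wt_nonneg _ _ _ _)
  rw [mul_right_comm]
  exact mul_le_mul (by linarith) (ha h2') (h0 _) (dd_pos _).le

theorem tauberian {α : ℕ → ℝ} (ha : Antitone α) (h0 : ∀ n, 0 ≤ α n) {C : ℝ}
    (h : Tendsto (fun z => W z * ∑' n, α n * z ^ n) (nhdsWithin 1 (Set.Iio 1)) (nhds C)) :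
    Tendsto (fun n => α n / dd n) atTop (nhds C) := by
  have hsmall : ∀ᶠ ε in nhdsWithin (0:ℝ) (Set.Ioi 0), 0 < ε ∧ ε < 1/2 := by
    filter_upwards [Ioo_mem_nhdsGT (show (0:ℝ) < 1/2 by norm_num)] with ε hε using hε
  rw [tendsto_order]
  constructor
  · intro a hlt
    have hc : ContinuousAt (fun ε : ℝ => (1 - ε) * (C - ε)) 0 := by fun_prop
    have h1 : Tendsto (fun ε : ℝ => (1 - ε) * (C - ε)) (nhdsWithin 0 (Set.Ioi 0)) (nhds C) := by
      have := hc.tendsto.mono_left (nhdsWithin_le_nhds (s := Set.Ioi 0))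
      simpa using this
    obtain ⟨ε, ⟨he0, he1⟩, he⟩ := (hsmall.and (h1.eventually_const_lt hlt)).exists
    have hr := ratio ha h0 h one_pos (show 1 < 1 + ε by linarith)
    filter_upwards [taub_lower ha h0 he0 he1, hr.eventually_const_lt (show C - ε < C by linarith)] with N h2 h3
    have := mul_lt_mul_of_pos_left h3 (show 0 < 1 - ε by linarith)
    linarith
  · intro b hlt
    have hc : ContinuousAt (fun ε : ℝ => (1 - ε) * b - (C + ε)) 0 := by fun_prop
    have h1 : Tendsto (fun ε : ℝ => (1 - ε) * b - (C + ε)) (nhdsWithin 0 (Set.Ioi 0)) (nhds (b - C)) := by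
      have := hc.tendsto.mono_left (nhdsWithin_le_nhds (s := Set.Ioi 0))
      simpa using this
    obtain ⟨ε, ⟨he0, he1⟩, he⟩ := (hsmall.and (h1.eventually_const_lt (show 0 < b - C by linarith))).exists
    have hr := ratio ha h0 h (show 0 < 1 - ε by linarith) (show 1 - ε < 1 by linarith)
    filter_upwards [taub_upper ha h0 he0 he1, hr.eventually_lt_const (show C < C + ε by linarith)] with N h2 h3
    have : (1 - ε) * (α N / dd N) < (1 - ε) * b := by linarith
    exact lt_of_mul_lt_mul_left this (by linarith)

end SlitPf
namespace SlitPf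

noncomputable def sv (V : Set (ℤ × ℤ)) (p : ℤ × ℤ) (n : ℕ) : ℝ := (TT V ^ n) 1 p / 4 ^ n

theorem sv_nonneg (V : Set (ℤ × ℤ)) (p : ℤ × ℤ) (n : ℕ) : 0 ≤ sv V p n :=
  div_nonneg (TT_pow_nonneg _ (by simp) _ _) (by positivity)

theorem sv_anti (V : Set (ℤ × ℤ)) (p : ℤ × ℤ) : Antitone (sv V p) := by
  refine antitone_nat_of_succ_le fun n => ?_
  unfold sv
  rw [div_le_div_iff₀ (by positivity) (by positivity), pow_succ (4:ℝ) n]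
  have h := mul_le_mul_of_nonneg_right (surv_anti V n p) (show (0:ℝ) ≤ 4 ^ n by positivity)
  linarith

theorem sv_zero (V : Set (ℤ × ℤ)) (p : ℤ × ℤ) : sv V p 0 = 1 := by simp [sv]

theorem sv_hasSum (V : Set (ℤ × ℤ)) (p : ℤ × ℤ) {z : ℝ} (h0 : 0 ≤ z) (h1 : z < 1) :
    HasSum (fun n => sv V p n * z ^ n) (RR V (z/4) 1 p) := by
  refine (RR_summable V (t := z/4) (by linarith) (by linarith) one_abs p).hasSum.congr_fun ?_
  intro n
  rw [sv, div_pow]; ring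

noncomputable def CS : ℝ := (Real.sqrt (4 * (Real.sqrt 2 - 1)))⁻¹

theorem CS_pos : 0 < CS := by
  unfold CS
  have := sqrt2_gt
  have : 0 < 4 * (Real.sqrt 2 - 1) := by linarith
  positivity

theorem WB_tendsto : Tendsto (fun z => W z * BB (z/4) 0) (nhdsWithin 1 (Set.Iio 1)) (nhds CS) := by
  have hpos : 0 < 4 * (Real.sqrt 2 - 1) := by linarith [sqrt2_gt]
  have h := ((Real.continuous_sqrt.tendsto _).comp LL_tendsto).inv₀ (Real.sqrt_pos.mpr hpos).ne'
  refine h.congr' ?_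
  filter_upwards [ev_z] with z hz
  exact (BB_rpow hz.1 hz.2).symm

theorem total_tendsto : Tendsto (fun n => sv slitH (0,0) n / dd n) atTop (nhds CS) := by
  refine tauberian (sv_anti _ _) (sv_nonneg _ _) (WB_tendsto.congr' ?_)
  filter_upwards [ev_z] with z hz
  rw [(sv_hasSum slitH (0,0) hz.1.le hz.2).tsum_eq]
  rfl

theorem sumA_tendsto (k : ℕ) : Tendsto (fun z => ∑ l ∈ Finset.range k, AA (z/4) l) (nhdsWithin 1 (Set.Iio 1))
    (nhds (∑ l ∈ Finset.range k, QL l)) := tendsto_finsetSum _ fun l _ => AA_tendsto l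

theorem sumA2_tendsto (k : ℕ) : Tendsto (fun z => ∑ l ∈ Finset.range k, AA (z/4) l ^ 2) (nhdsWithin 1 (Set.Iio 1))
    (nhds (∑ l ∈ Finset.range k, QL l ^ 2)) := tendsto_finsetSum _ fun l _ => (AA_tendsto l).pow 2

theorem non_tendsto (k : ℕ) (hk : 1 ≤ k) :
    Tendsto (fun n => sv (slitH ∪ {((k:ℤ),0)}) (0,0) n / dd n) atTop
      (nhds (CS * (1 - QL k * (∑ l ∈ Finset.range k, QL l) / (∑ l ∈ Finset.range k, QL l ^ 2)))) := by
  have hq := sumsq_pos k hk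
  have h := WB_tendsto.mul ((((AA_tendsto k).mul (sumA_tendsto k)).div (sumA2_tendsto k) hq.ne').const_sub 1)
  refine tauberian (sv_anti _ _) (sv_nonneg _ _) (h.congr' ?_)
  filter_upwards [ev_z, (sumA2_tendsto k).eventually_const_lt hq] with z hz hs
  rw [(sv_hasSum _ _ hz.1.le hz.2).tsum_eq]
  have e0 : 0 ≤ z / 4 := by linarith [hz.1]
  have e1 : z / 4 < 1 / 4 := by linarith [hz.2]
  have hG := nonvisit_GF e0 e1 k hk
  have hL := LL_pos e0 e1
  have hB : BB (z/4) k = LL (z/4) * BB (z/4) 0 * ∑ l ∈ Finset.range k, AA (z/4) l := by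
    obtain ⟨j, rfl⟩ := Nat.exists_eq_add_of_le' hk
    exact BB_eq e0 e1 j
  rw [hB] at hG
  set S2 := ∑ l ∈ Finset.range k, AA (z/4) l ^ 2
  set S1 := ∑ l ∈ Finset.range k, AA (z/4) l
  set X := RR (slitH ∪ {((k : ℤ),0)}) (z/4) 1 (0,0)
  have hX : X = BB (z/4) 0 * (1 - AA (z/4) k * S1 / S2) := by
    have h2 : S2 * X = S2 * BB (z/4) 0 - AA (z/4) k * (BB (z/4) 0 * S1) := by
      apply mul_left_cancel₀ hL.ne'
      linear_combination hG
    have hne := hs.ne'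
    field_simp
    linear_combination h2
  change W z * BB (z/4) 0 * (1 - AA (z/4) k * S1 / S2) = W z * X
  rw [hX]; ring

theorem cauchy {f g : ℕ → ℝ} {F G z : ℝ} (hf : HasSum (fun n => f n * z ^ n) F) (hg : HasSum (fun n => g n * z ^ n) G) :
    HasSum (fun n => (∑ m ∈ Finset.range (n+1), f m * g (n - m)) * z ^ n) (F * G) := by
  have h := hasSum_sum_range_mul_of_summable_norm hf.summable.norm hg.summable.norm
  rw [hf.tsum_eq, hg.tsum_eq] at h
  refine h.congr_fun fun n => ?_
  rw [Finset.sum_mul]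
  refine Finset.sum_congr rfl fun m hm => ?_
  rw [Finset.mem_range] at hm
  rw [show z ^ n = z ^ m * z ^ (n - m) by rw [← pow_add]; congr 1; omega]
  ring

noncomputable def tl (k n : ℕ) : ℝ := QL k - ∑ m ∈ Finset.range (n+1), gam k m

theorem tl_nonneg (k n : ℕ) : 0 ≤ tl k n :=
  sub_nonneg.mpr (sum_le_hasSum _ (fun m _ => gam_nonneg k m) (gam_tsum k))

theorem tl_succ (k n : ℕ) : tl k (n+1) = tl k n - gam k (n+1) := by
  unfold tl; rw [Finset.sum_range_succ _ (n+1)]; ring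

theorem tl_anti (k : ℕ) : Antitone (tl k) := antitone_nat_of_succ_le fun n => by
  rw [tl_succ]; linarith [gam_nonneg k (n+1)]

theorem tl_hasSum (k : ℕ) {z : ℝ} (h0 : 0 ≤ z) (h1 : z < 1) :
    HasSum (fun n => tl k n * z ^ n) ((QL k - AA (z/4) k) / (1 - z)) := by
  have hg : HasSum (fun n => (1:ℝ) * z ^ n) (1 - z)⁻¹ := by
    simpa using hasSum_geometric_of_lt_one h0 h1
  have h := (hg.mul_left (QL k)).sub (cauchy (AA_gam_hasSum k h0 h1) hg)
  rw [div_eq_mul_inv, sub_mul]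
  refine h.congr_fun fun n => ?_
  simp only [tl, mul_one]
  ring

theorem tl_tendsto (k : ℕ) : Tendsto (fun z => W z * ∑' n, tl k n * z ^ n) (nhdsWithin 1 (Set.Iio 1)) (nhds 0) := by
  obtain ⟨c, hc⟩ := (AA_bigO k).bound
  have h1 : Tendsto (fun z : ℝ => c * (1 - z) ^ (1/4:ℝ)) (nhdsWithin 1 (Set.Iio 1)) (nhds 0) := by
    have : ContinuousAt (fun z : ℝ => c * (1 - z) ^ (1/4:ℝ)) 1 := by
      refine continuousAt_const.mul (ContinuousAt.rpow_const (by fun_prop) (Or.inr (by norm_num)))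
    have := this.tendsto.mono_left (nhdsWithin_le_nhds (s := Set.Iio 1))
    simpa using this
  refine squeeze_zero_norm' ?_ h1
  filter_upwards [ev_z, hc] with z hz hcz
  have hp : 0 < 1 - z := by linarith [hz.2]
  rw [(tl_hasSum k hz.1.le hz.2).tsum_eq, norm_mul, norm_div, Real.norm_of_nonneg (W_nonneg hz.2),
    Real.norm_of_nonneg hp.le]
  have hr : ‖rz z‖ = (1 - z) ^ (1/2:ℝ) := by
    rw [Real.norm_of_nonneg (rz_prop hz.1 hz.2).1.le, ← Real.sqrt_eq_rpow, rz]
  rw [hr] at hcz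
  have e : W z * (1 - z) ^ (1/2:ℝ) = (1 - z) ^ (1/4:ℝ) * (1 - z) := by
    unfold W
    rw [← Real.rpow_add hp, ← Real.rpow_add_one hp.ne']; norm_num
  rw [← mul_div_assoc, div_le_iff₀ hp]
  calc W z * ‖QL k - AA (z/4) k‖ ≤ W z * (c * (1 - z) ^ (1/2:ℝ)) := mul_le_mul_of_nonneg_left hcz (W_nonneg hz.2)
    _ = c * (W z * (1 - z) ^ (1/2:ℝ)) := by ring
    _ = _ := by rw [e]; ring

noncomputable def vw (k n : ℕ) : ℝ := ∑ m ∈ Finset.range (n+1), gam k m * sv slitH ((k:ℤ),0) (n - m)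

theorem vw_nonneg (k n : ℕ) : 0 ≤ vw k n :=
  Finset.sum_nonneg fun m _ => mul_nonneg (gam_nonneg k m) (sv_nonneg _ _ _)

theorem vw_tl_anti (k : ℕ) : Antitone (fun n => vw k n + tl k n) := antitone_nat_of_succ_le fun n => by
  rw [tl_succ]
  have : vw k (n+1) ≤ vw k n + gam k (n+1) := by
    unfold vw
    rw [Finset.sum_range_succ _ (n+1), Nat.sub_self, sv_zero, mul_one]
    refine add_le_add_left (Finset.sum_le_sum fun m hm => ?_) _
    refine mul_le_mul_of_nonneg_left (sv_anti _ _ (by omega)) (gam_nonneg k m)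
  linarith

theorem vw_hasSum (k : ℕ) {z : ℝ} (h0 : 0 ≤ z) (h1 : z < 1) :
    HasSum (fun n => vw k n * z ^ n) (AA (z/4) k * BB (z/4) k) :=
  cauchy (AA_gam_hasSum k h0 h1) (sv_hasSum slitH ((k:ℤ),0) h0 h1)

theorem vw_tendsto (k : ℕ) (hk : 1 ≤ k) : Tendsto (fun n => vw k n / dd n) atTop
    (nhds (CS * (4 * (Real.sqrt 2 - 1) * QL k * ∑ l ∈ Finset.range k, QL l))) := by
  have h1 := tauberian (tl_anti k) (tl_nonneg k) (tl_tendsto k)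
  have h2 : Tendsto (fun z => W z * ∑' n, (vw k n + tl k n) * z ^ n) (nhdsWithin 1 (Set.Iio 1))
      (nhds (CS * (4 * (Real.sqrt 2 - 1) * QL k * ∑ l ∈ Finset.range k, QL l) + 0)) := by
    have h := (WB_tendsto.mul ((LL_tendsto.mul (AA_tendsto k)).mul (sumA_tendsto k))).add (tl_tendsto k)
    refine h.congr' ?_
    filter_upwards [ev_z] with z hz
    have e0 : 0 ≤ z / 4 := by linarith [hz.1]
    have e1 : z / 4 < 1 / 4 := by linarith [hz.2]
    have hB : BB (z/4) k = LL (z/4) * BB (z/4) 0 * ∑ l ∈ Finset.range k, AA (z/4) l := by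
      obtain ⟨j, rfl⟩ := Nat.exists_eq_add_of_le' hk
      exact BB_eq e0 e1 j
    have s1 := vw_hasSum k hz.1.le hz.2
    have s2 := tl_hasSum k hz.1.le hz.2
    have e : ∀ n, (vw k n + tl k n) * z ^ n = vw k n * z ^ n + tl k n * z ^ n := fun n => by ring
    simp only [e]
    rw [s1.summable.tsum_add s2.summable, s1.tsum_eq, hB]
    ring
  have h3 := (tauberian (vw_tl_anti k) (fun n => add_nonneg (vw_nonneg k n) (tl_nonneg k n)) h2).sub h1
  rw [add_zero, sub_zero] at h3
  refine h3.congr fun n => ?_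
  rw [← sub_div, add_sub_cancel_right]

theorem visits_vw (k n : ℕ) : (totalVisits k n : ℝ) / 4 ^ n = vw k n := by
  rw [visits_eq, vw, Finset.sum_div]
  refine Finset.sum_congr rfl fun m hm => ?_
  rw [Finset.mem_range] at hm
  rw [gam, sv, show (4:ℝ) ^ n = 4 ^ m * 4 ^ (n - m) by rw [← pow_add]; congr 1; omega, div_mul_div_comm]

theorem total_sv (n : ℕ) : (slitTotal sqSteps n : ℝ) / 4 ^ n = sv slitH (0,0) n := by
  rw [total_eq, sv]

theorem sv_pos_ev : ∀ᶠ n in atTop, 0 < sv slitH (0,0) n := by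
  filter_upwards [total_tendsto.eventually_const_lt CS_pos] with n hn
  exact (div_pos_iff_of_pos_right (dd_pos n)).mp hn

theorem ratio_lim {x : ℕ → ℝ} {L : ℝ} (h : Tendsto (fun n => x n / 4 ^ n / dd n) atTop (nhds (CS * L))) :
    Tendsto (fun n => x n / (slitTotal sqSteps n : ℝ)) atTop (nhds L) := by
  have h2 := h.div total_tendsto CS_pos.ne'
  rw [mul_div_cancel_left₀ _ CS_pos.ne'] at h2
  refine h2.congr fun n => ?_
  rw [Pi.div_apply, ← total_sv, div_div_div_cancel_right₀ (dd_pos n).ne', div_div_div_cancel_right₀ (by positivity)]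

theorem visit_lim (k : ℕ) (hk : 1 ≤ k) : Tendsto (fun n : ℕ => (visitCount k n : ℝ) / (slitTotal sqSteps n : ℝ))
    atTop (nhds (limVisitProb k)) := by
  apply ratio_lim
  have h := total_tendsto.sub (non_tendsto k hk)
  unfold limVisitProb
  simp only [sSum_eq]
  rw [show CS - CS * (1 - QL k * (∑ l ∈ Finset.range k, QL l) / (∑ l ∈ Finset.range k, QL l ^ 2)) =
    CS * (QL k * (∑ l ∈ Finset.range k, QL l) / (∑ l ∈ Finset.range k, QL l ^ 2)) by ring] at h
  refine h.congr fun n => ?_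
  have e := nonvisit_eq (k:ℤ) (by exact_mod_cast hk) n
  rw [← total_sv, sv, ← sub_div, ← sub_div, e, add_sub_cancel_right]

theorem num_lim (k : ℕ) (hk : 1 ≤ k) : Tendsto (fun n : ℕ => (totalVisits k n : ℝ) / (slitTotal sqSteps n : ℝ))
    atTop (nhds (limVisitNum k)) := by
  apply ratio_lim
  unfold limVisitNum
  simp only [sSum_eq, visits_vw]
  exact vw_tendsto k hk

end SlitPf
/-- transience of walks on the slit plane.  For `k ≥ 1`, the proportion
of `n`-step walks on the slit plane visiting `(k,0)` tends to
`p_k = s_k (∑_{ℓ<k} s_ℓ)/(∑_{ℓ<k} s_ℓ²) < 1`, and the average number of visits to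
`(k,0)` tends to `v_k = 4(√2−1) s_k ∑_{ℓ<k} s_ℓ`; in particular `p₁ = 2−√2`,
`p₂ = (5/34)(19−11√2)`, `v₁ = 4(3√2−4)`, `v₂ = 10(22√2−31)`. -/
theorem slit_plane_transience (k : ℕ) (hk : 1 ≤ k) :
    (∀ ℓ : ℕ, Summable fun n : ℕ => (slitCount sqSteps ℓ 0 n : ℝ) / 4 ^ n)
    ∧ Tendsto (fun n : ℕ => (visitCount k n : ℝ) / (slitTotal sqSteps n : ℝ))
        atTop (nhds (limVisitProb k))
    ∧ limVisitProb k < 1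
    ∧ Tendsto (fun n : ℕ => (totalVisits k n : ℝ) / (slitTotal sqSteps n : ℝ))
        atTop (nhds (limVisitNum k))
    ∧ limVisitProb 1 = 2 - Real.sqrt 2
    ∧ limVisitProb 2 = 5 / 34 * (19 - 11 * Real.sqrt 2)
    ∧ limVisitNum 1 = 4 * (3 * Real.sqrt 2 - 4)
    ∧ limVisitNum 2 = 10 * (22 * Real.sqrt 2 - 31) := by
  refine ⟨fun l => ?_, SlitPf.visit_lim k hk, ?_, SlitPf.num_lim k hk, ?_, ?_, ?_, ?_⟩
  · simp only [SlitPf.count_gam]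
    exact SlitPf.gam_summable l
  · unfold limVisitProb
    simp only [SlitPf.sSum_eq]
    exact SlitPf.prob_lt k hk
  · simp only [limVisitProb, SlitPf.sSum_eq, Finset.sum_range_succ, Finset.sum_range_zero,
      SlitPf.QL_zero, SlitPf.QL_one]
    norm_num
  · simp only [limVisitProb, SlitPf.sSum_eq, Finset.sum_range_succ, Finset.sum_range_zero,
      SlitPf.QL_zero, SlitPf.QL_one, SlitPf.QL_two]
    have h2 := SlitPf.sqrt2_sq
    have hpos : (0:ℝ) + 1 ^ 2 + (2 - Real.sqrt 2) ^ 2 ≠ 0 := by positivity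
    rw [div_eq_iff hpos]
    generalize Real.sqrt 2 = s at *
    have h3 : s ^ 3 = 2 * s := by linear_combination s * h2
    ring_nf
    ring_nf at h2
    simp only [h2, h3]
    ring_nf
  · simp only [limVisitNum, SlitPf.sSum_eq, Finset.sum_range_succ, Finset.sum_range_zero,
      SlitPf.QL_zero, SlitPf.QL_one]
    linear_combination (-4) * SlitPf.sqrt2_sq
  · simp only [limVisitNum, SlitPf.sSum_eq, Finset.sum_range_succ, Finset.sum_range_zero,
      SlitPf.QL_zero, SlitPf.QL_one, SlitPf.QL_two]
    have h2 := SlitPf.sqrt2_sq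
    generalize Real.sqrt 2 = s at *
    have h3 : s ^ 3 = 2 * s := by linear_combination s * h2
    ring_nf
    ring_nf at h2
    simp only [h2, h3]
    ring_nf
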